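/- Let n ≥ 1 and let S be a smooth compact (2n−1)-dimensional hypersurface in ℝⁿ×ℝⁿ which has at least n+1 non-vanishing principal curvatures at every point, with normalized surface measure σ. Define the bilinear maximal function 𝔐^S(f,g)(x) = sup_{t>0} |∫_S f(x−ty) g(x−tz) dσ(y,z)| for f,g ∈ 𝒮(ℝⁿ). Then for every 1 < p, q, r ≤ ∞ with 1/r = 1/p + 1/q there is a constant C such that ‖𝔐^S(f,g)‖_{L^r(ℝⁿ)} ≤ C ‖f‖_{L^p(ℝⁿ)} ‖g‖_{L^q(ℝⁿ)}. -/

import Mathlib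

open MeasureTheory Metric Set
open scoped ENNReal NNReal SchwartzMap

noncomputable section

abbrev Rn (n : ℕ) : Type := EuclideanSpace ℝ (Fin n)

abbrev E2 (n : ℕ) : Type := Rn n × Rn n

/-- `L^r` quasi-norm (in `ℝ≥0∞`) of an `ℝ≥0∞`-valued function. -/
def lpNormE {α : Type*} [MeasurableSpace α] (μ : Measure α) (F : α → ℝ≥0∞) (r : ℝ≥0∞) : ℝ≥0∞ :=
  if r = 0 then 0 else if r = ∞ then essSup F μ
  else (∫⁻ x, F x ^ r.toReal ∂μ) ^ (1 / r.toReal)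

/-- The Hessian of `Φ` at `x`, as a bilinear map. -/
def hess {n : ℕ} (Φ : E2 n → ℝ) (x u v : E2 n) : ℝ :=
  fderiv ℝ (fun y => fderiv ℝ Φ y v) x u

/-- `S` is a smooth compact hypersurface of `ℝⁿ × ℝⁿ` having at least `k`
non-vanishing principal curvatures at every point: near each `p ∈ S` the set `S` is the
zero set of a smooth defining function `Φ` with non-vanishing gradient, and the second
fundamental form (i.e. the Hessian of `Φ` restricted to the tangent space `ker dΦ_p`)
is non-degenerate on some `k`-dimensional subspace of the tangent space. -/
def IsSmoothHypersurfaceWithCurvatures (n k : ℕ) (S : Set (E2 n)) : Prop :=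
  IsCompact S ∧
  ∀ p ∈ S, ∃ (U : Set (E2 n)) (Φ : E2 n → ℝ),
    IsOpen U ∧ p ∈ U ∧ ContDiff ℝ (⊤ : ℕ∞) Φ ∧ S ∩ U = {x ∈ U | Φ x = 0} ∧
    fderiv ℝ Φ p ≠ 0 ∧
    ∃ W : Submodule ℝ (E2 n),
      (∀ w ∈ W, fderiv ℝ Φ p w = 0) ∧
      Module.finrank ℝ W = k ∧
      ∀ w ∈ W, w ≠ 0 → ∃ w' ∈ W, hess Φ p w w' ≠ 0

/-- The normalized surface measure on `S`: the normalized `(2n-1)`-dimensional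
Hausdorff measure restricted to `S`. -/
def μSurf (n : ℕ) (S : Set (E2 n)) : Measure (E2 n) :=
  (μH[(2 * (n : ℝ) - 1)] S)⁻¹ • (μH[(2 * (n : ℝ) - 1)]).restrict S

/-- The bilinear maximal function `𝔐^S(f,g)(x) = sup_{t>0} |∫_S f(x-ty) g(x-tz) dσ(y,z)|`. -/
def biMaxS (n : ℕ) (S : Set (E2 n)) (f g : Rn n → ℝ) (x : Rn n) : ℝ≥0∞ :=
  ⨆ t ∈ Ioi (0 : ℝ),
    ENNReal.ofReal |∫ p, f (x - t • p.1) * g (x - t • p.2) ∂(μSurf n S)|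

/-- Maximal function of averages over the shifted balls `x - t B(y, κ)` (up to a constant). -/
def shMax {n : ℕ} (f : Rn n → ℝ≥0∞) (y : Rn n) (κ : ℝ) (x : Rn n) : ℝ≥0∞ :=
  ⨆ t ∈ Ioi (0 : ℝ), ∫⁻ b in ball (0 : Rn n) 1, f (x - t • (y + κ • b))

theorem lintegral_ball_scale {n : ℕ} (f : Rn n → ℝ≥0∞) (hf : Measurable f) (c : Rn n) (r : ℝ)
    (hr : 0 < r) :
    ENNReal.ofReal (r ^ n) * ∫⁻ b in ball (0 : Rn n) 1, f (c - r • b) =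
      ∫⁻ u in ball c r, f u := by
  have h1 : ∫⁻ b in ball (0 : Rn n) 1, f (c - r • b)
      = ∫⁻ b, (ball c r).indicator f (c - r • b) := by
    rw [← lintegral_indicator measurableSet_ball]
    refine lintegral_congr fun b => ?_
    have : b ∈ ball (0 : Rn n) 1 ↔ c - r • b ∈ ball c r := by
      simp [norm_smul, abs_of_pos hr]
      constructor
      · intro h; nlinarith
      · intro h; by_contra h'; push Not at h'; nlinarith
    by_cases hb : b ∈ ball (0 : Rn n) 1
    · rw [indicator_of_mem hb, indicator_of_mem (this.1 hb)]
    · rw [indicator_of_notMem hb, indicator_of_notMem (fun h => hb (this.2 h))]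
  have hm : Measurable ((ball c r).indicator f) := hf.indicator measurableSet_ball
  have h2 : ∫⁻ b, (ball c r).indicator f (c - r • b)
      = ENNReal.ofReal ((r ^ n)⁻¹) * ∫⁻ b, (ball c r).indicator f (c - b) := by
    have := lintegral_map (μ := (volume : Measure (Rn n))) (g := fun b : Rn n => r • b)
      (f := fun b => (ball c r).indicator f (c - b)) (by fun_prop) (by fun_prop)
    rw [← this, Measure.map_addHaar_smul volume hr.ne', lintegral_smul_measure]
    simp [abs_of_pos hr]
  rw [h1, h2, lintegral_sub_left_eq_self, lintegral_indicator measurableSet_ball, ← mul_assoc,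
    ← ENNReal.ofReal_mul (by positivity), mul_inv_cancel₀ (by positivity)]
  simp

theorem shMax_weak (n : ℕ) (hn : 1 ≤ n) (R : ℝ) (hR : 0 < R) :
    ∃ C : ℝ≥0, ∀ (y : Rn n) (κ : ℝ) (f : Rn n → ℝ≥0∞) (α : ℝ≥0∞), ‖y‖ ≤ R → 0 < κ → κ ≤ R →
      Measurable f → α ≠ 0 → α ≠ ∞ →
      volume {x | α < shMax f y κ x} ≤ C * ENNReal.ofReal κ⁻¹ * (α⁻¹ * ∫⁻ x, f x) := by
  set v : ℝ≥0∞ := volume (ball (0 : Rn n) 1) with hv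
  have hvtop : v ≠ ∞ := measure_ball_lt_top.ne
  refine ⟨(ENNReal.ofReal (3 * R) * (4 ^ n * v)).toNNReal, ?_⟩
  rw [ENNReal.coe_toNNReal (by finiteness)]
  intro y κ f α hy hκ hκR hf hα hα'
  by_cases hI : ∫⁻ x, f x = ∞
  · rw [hI]
    have : Nontrivial (Rn n) := by
      have : Nonempty (Fin n) := ⟨⟨0, hn⟩⟩
      infer_instance
    have hv0 : v ≠ 0 := (measure_ball_pos _ _ one_pos).ne'
    rw [ENNReal.mul_top (by simpa using hα'), ENNReal.mul_top]
    · exact le_top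
    · simp [hv0, hR, hκ]
  set E := {x | α < shMax f y κ x} with hE
  have hex : ∀ x : Rn n, ∃ t : ℝ, x ∈ E → 0 < t ∧
      α < ∫⁻ b in ball (0 : Rn n) 1, f (x - t • (y + κ • b)) := by
    intro x
    by_cases hx : x ∈ E
    · have hx' : α < shMax f y κ x := hx
      simp only [shMax, lt_iSup_iff] at hx'
      obtain ⟨t, ht, h⟩ := hx'
      exact ⟨t, fun _ => ⟨ht, h⟩⟩
    · exact ⟨0, fun h => absurd h hx⟩
  choose t ht using hex
  have key : ∀ x ∈ E, α * ENNReal.ofReal ((t x * κ) ^ n) ≤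
      ∫⁻ u in closedBall (x - t x • y) (t x * κ), f u := by
    intro x hx
    obtain ⟨h0, h1⟩ := ht x hx
    have := lintegral_ball_scale f hf (x - t x • y) (t x * κ) (by positivity)
    calc α * ENNReal.ofReal ((t x * κ) ^ n) ≤ ENNReal.ofReal ((t x * κ) ^ n) *
          ∫⁻ b in ball (0 : Rn n) 1, f (x - t x • y - (t x * κ) • b) := by
          rw [mul_comm]
          gcongr
          refine h1.le.trans (le_of_eq ?_)
          refine lintegral_congr fun b => ?_
          congr 1
          rw [smul_add, smul_smul]; abel
      _ = ∫⁻ u in ball (x - t x • y) (t x * κ), f u := this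
      _ ≤ _ := lintegral_mono_set ball_subset_closedBall
  have hbd : ∀ x ∈ E, t x ≤ max 1 ((α⁻¹ * ∫⁻ x, f x).toReal) / κ := by
    intro x hx
    obtain ⟨h0, h1⟩ := ht x hx
    rw [le_div_iff₀ hκ]
    by_cases h : t x * κ ≤ 1
    · exact le_max_of_le_left h
    · apply le_max_of_le_right
      push Not at h
      have h3 : ENNReal.ofReal ((t x * κ) ^ n) ≤ α⁻¹ * ∫⁻ x, f x := by
        have := (key x hx).trans (setLIntegral_le_lintegral _ _)
        calc _ = α⁻¹ * (α * ENNReal.ofReal ((t x * κ) ^ n)) := by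
              rw [← mul_assoc, ENNReal.inv_mul_cancel hα hα', one_mul]
          _ ≤ _ := by gcongr
      have h4 : (t x * κ) ^ n ≤ (α⁻¹ * ∫⁻ x, f x).toReal := by
        rw [ENNReal.ofReal_le_iff_le_toReal] at h3
        · exact h3
        · finiteness
      exact (le_self_pow₀ h.le (by omega)).trans h4
  obtain ⟨u, huE, hudisj, hu⟩ := Vitali.exists_disjoint_subfamily_covering_enlargement
    (fun x : Rn n => closedBall (x - t x • y) (t x * κ)) E t 2 one_lt_two
    (fun x hx => (ht x hx).1.le) _ hbd
    (fun x hx => nonempty_closedBall.2 (mul_nonneg (ht x hx).1.le hκ.le))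
  have hucount : u.Countable := by
    refine hudisj.countable_of_nonempty_interior fun x hx => ?_
    have := (ht x (huE hx)).1
    refine ⟨x - t x • y, ball_subset_interior_closedBall (mem_ball_self (by positivity))⟩
  have := hucount.to_subtype
  set N : ℕ := ⌊2 * R / κ⌋₊ + 1 with hN
  have hcov : E ⊆ ⋃ b : u, ⋃ i : Fin N,
      closedBall ((b : Rn n) - t b • y + ((i : ℕ) * (t b * κ / R)) • y) (4 * (t b * κ)) := by
    intro x hx
    obtain ⟨b, hbu, ⟨w, hw1, hw2⟩, htb⟩ := hu x hx
    obtain ⟨tx0, -⟩ := ht x hx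
    obtain ⟨tb0, -⟩ := ht b (huE hbu)
    simp only [mem_iUnion]
    have hs : 0 < t b * κ / R := by positivity
    set s := t b * κ / R with hsdef
    have hi1 : (⌊t x / s⌋₊ : ℝ) ≤ t x / s := Nat.floor_le (by positivity)
    have hi2 : t x / s < ⌊t x / s⌋₊ + 1 := Nat.lt_floor_add_one _
    refine ⟨⟨b, hbu⟩, ⟨⌊t x / s⌋₊, ?_⟩, ?_⟩
    · rw [hN, Nat.lt_succ_iff]
      apply Nat.floor_le_floor
      rw [hsdef, div_div_eq_mul_div, div_le_div_iff₀ (by positivity) hκ]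
      nlinarith [mul_pos hR hκ]
    · rw [mem_closedBall] at *
      simp only
      have h1 : dist (x - t x • y) (b - t b • y) ≤ t x * κ + t b * κ := by
        refine (dist_triangle _ w _).trans ?_
        rw [dist_comm _ w]; linarith
      have h2 : ‖(t x - ⌊t x / s⌋₊ * s) • y‖ ≤ s * R := by
        rw [norm_smul, Real.norm_eq_abs]
        rw [le_div_iff₀ hs] at hi1
        rw [div_lt_iff₀ hs] at hi2
        rw [abs_of_nonneg (by linarith)]
        refine mul_le_mul (by linarith) hy (norm_nonneg _) hs.le
      have h3 : s * R = t b * κ := by rw [hsdef]; field_simp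
      rw [dist_eq_norm] at *
      calc _ = ‖(x - t x • y - (b - t b • y)) + (t x - ⌊t x / s⌋₊ * s) • y‖ := by
            congr 1; rw [sub_smul]; abel
        _ ≤ (t x * κ + t b * κ) + t b * κ := by
            refine (norm_add_le _ _).trans (add_le_add h1 (h2.trans h3.le))
        _ ≤ _ := by nlinarith
  calc volume E ≤ ∑' b : u, ∑' i : Fin N, volume
          (closedBall ((b : Rn n) - t b • y + ((i : ℕ) * (t b * κ / R)) • y) (4 * (t b * κ))) := by
        refine (measure_mono hcov).trans ((measure_iUnion_le _).trans ?_)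
        exact ENNReal.tsum_le_tsum fun b => measure_iUnion_le _
    _ = ∑' b : u, (N : ℝ≥0∞) * (4 ^ n * v) * ENNReal.ofReal ((t b * κ) ^ n) := by
        refine tsum_congr fun b => ?_
        obtain ⟨tb0, -⟩ := ht b (huE b.2)
        simp_rw [Measure.addHaar_closedBall volume _ (by positivity : 0 ≤ 4 * (t b * κ))]
        rw [tsum_fintype, Finset.sum_const, Finset.card_univ, Fintype.card_fin, nsmul_eq_mul,
          finrank_euclideanSpace_fin, mul_pow, ENNReal.ofReal_mul (by positivity),
          ENNReal.ofReal_pow (by norm_num)]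
        norm_num
        ring
    _ ≤ ∑' b : u, (N : ℝ≥0∞) * (4 ^ n * v) * (α⁻¹ *
          ∫⁻ u in closedBall ((b : Rn n) - t b • y) (t b * κ), f u) := by
        refine ENNReal.tsum_le_tsum fun b => ?_
        gcongr
        calc _ = α⁻¹ * (α * ENNReal.ofReal ((t b * κ) ^ n)) := by
              rw [← mul_assoc, ENNReal.inv_mul_cancel hα hα', one_mul]
          _ ≤ _ := by gcongr; exact key b (huE b.2)
    _ = (N : ℝ≥0∞) * (4 ^ n * v) * (α⁻¹ *
          ∫⁻ x in ⋃ b : u, closedBall ((b : Rn n) - t b • y) (t b * κ), f x) := by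
        rw [lintegral_iUnion (fun b => measurableSet_closedBall), ENNReal.tsum_mul_left,
          ENNReal.tsum_mul_left]
        exact hudisj.subtype _ _
    _ ≤ (N : ℝ≥0∞) * (4 ^ n * v) * (α⁻¹ * ∫⁻ x, f x) := by
        gcongr; exact Measure.restrict_le_self
    _ ≤ _ := by
        rw [mul_right_comm (ENNReal.ofReal (3 * R)), ← ENNReal.ofReal_mul (by positivity)]
        gcongr
        rw [← ENNReal.ofReal_natCast]
        apply ENNReal.ofReal_le_ofReal
        rw [hN]
        push_cast
        have : (⌊2 * R / κ⌋₊ : ℝ) ≤ 2 * R / κ := Nat.floor_le (by positivity)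
        have h1 : 1 ≤ R / κ := by rwa [one_le_div hκ]
        calc _ ≤ 2 * R / κ + R / κ := by linarith
          _ = _ := by ring

theorem lowerSemicontinuous_lintegral_of_continuous {X Y : Type*} [TopologicalSpace X]
    [FirstCountableTopology X] [MeasurableSpace Y] (μ : Measure Y) (F : X → Y → ℝ≥0∞)
    (hm : ∀ x, Measurable (F x)) (hc : ∀ y, Continuous fun x => F x y) :
    LowerSemicontinuous fun x => ∫⁻ y, F x y ∂μ := by
  intro x
  refine lowerSemicontinuousAt_iff_le_liminf.2 ?_
  refine le_trans (le_of_eq ?_) (lintegral_liminf_le hm)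
  refine lintegral_congr fun y => ?_
  exact ((hc y).tendsto x).liminf_eq.symm

theorem shMax_measurable {n : ℕ} {f : Rn n → ℝ≥0∞} (hf : Continuous f) :
    Measurable fun q : (Rn n × ℝ) × Rn n => shMax f q.1.1 q.1.2 q.2 := by
  apply LowerSemicontinuous.measurable
  unfold shMax
  refine lowerSemicontinuous_biSup fun t _ => ?_
  refine lowerSemicontinuous_lintegral_of_continuous _ _ (fun q => ?_) (fun b => ?_)
  · exact hf.measurable.comp (by fun_prop)
  · exact hf.comp (by fun_prop)

theorem lintegral_Ioc_rpow (T : ℝ) (hT : 0 ≤ T) (r : ℝ) (hr : -1 < r) :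
    ∫⁻ s in Ioc 0 T, ENNReal.ofReal (s ^ r) = ENNReal.ofReal (T ^ (r + 1) / (r + 1)) := by
  have hi : IntervalIntegrable (fun s : ℝ => s ^ r) volume 0 T :=
    intervalIntegral.intervalIntegrable_rpow' hr
  rw [intervalIntegrable_iff_integrableOn_Ioc_of_le hT] at hi
  rw [← ofReal_integral_eq_lintegral_ofReal hi, ← intervalIntegral.integral_of_le hT,
    integral_rpow (Or.inl hr), Real.zero_rpow (by linarith), sub_zero]
  refine (ae_restrict_iff' measurableSet_Ioc).2 (Filter.Eventually.of_forall fun s hs => ?_)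
  exact Real.rpow_nonneg hs.1.le _

theorem shMax_le_add {n : ℕ} (f g : Rn n → ℝ≥0∞) (a : ℝ≥0∞) (hg : Measurable g)
    (h : ∀ x, f x ≤ g x + a) (y : Rn n) (κ : ℝ) (x : Rn n) :
    shMax f y κ x ≤ shMax g y κ x + a * volume (ball (0 : Rn n) 1) := by
  unfold shMax
  refine iSup₂_le fun t ht => ?_
  calc ∫⁻ b in ball (0 : Rn n) 1, f (x - t • (y + κ • b))
      ≤ ∫⁻ b in ball (0 : Rn n) 1, (g (x - t • (y + κ • b)) + a) :=
        lintegral_mono fun b => h _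
    _ = (∫⁻ b in ball (0 : Rn n) 1, g (x - t • (y + κ • b))) + a * volume (ball (0 : Rn n) 1) := by
        rw [lintegral_add_right _ measurable_const]
        simp
    _ ≤ _ := by
        gcongr
        exact le_iSup₂ (f := fun t _ => ∫⁻ b in ball (0 : Rn n) 1, g (x - t • (y + κ • b))) t ht

theorem shMax_strong (n : ℕ) (hn : 1 ≤ n) (R : ℝ) (hR : 0 < R) (p : ℝ) (hp : 1 < p) :
    ∃ C : ℝ≥0, ∀ (y : Rn n) (κ : ℝ) (f : Rn n → ℝ≥0∞), ‖y‖ ≤ R → 0 < κ → κ ≤ R →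
      Continuous f → (∃ M : ℝ≥0, ∀ x, f x ≤ M) →
      ∫⁻ x, shMax f y κ x ^ p ≤ C * ENNReal.ofReal κ⁻¹ * ∫⁻ x, f x ^ p := by
  obtain ⟨C, hC⟩ := shMax_weak n hn R hR
  set v : ℝ≥0∞ := volume (ball (0 : Rn n) 1) with hv
  have hvtop : v ≠ ∞ := measure_ball_lt_top.ne
  have : Nontrivial (Rn n) := by
    have : Nonempty (Fin n) := ⟨⟨0, hn⟩⟩
    infer_instance
  have hv0 : v ≠ 0 := (measure_ball_pos _ _ one_pos).ne'
  set D : ℝ≥0∞ := ENNReal.ofReal p * (C * 2 * ((2 * v) ^ (p - 1) * ENNReal.ofReal (p - 1)⁻¹)) with hD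
  have hDtop : D ≠ ∞ := by
    have : (2 * v) ^ (p - 1) ≠ ∞ := ENNReal.rpow_ne_top_of_nonneg (by linarith) (by finiteness)
    finiteness
  refine ⟨D.toNNReal, ?_⟩
  rw [ENNReal.coe_toNNReal hDtop]
  rintro y κ f hy hκ hκR hf ⟨M, hM⟩
  have hNtop : ∀ x, shMax f y κ x ≠ ∞ := by
    intro x
    have := shMax_le_add f (fun _ => 0) M measurable_const (by simpa using hM) y κ x
    refine ne_top_of_le_ne_top ?_ this
    simp [shMax]
    finiteness
  have hNm : Measurable fun x => shMax f y κ x :=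
    (shMax_measurable hf).comp (f := fun x : Rn n => ((y, κ), x)) (by fun_prop)
  have e1 : ∫⁻ x, shMax f y κ x ^ p = ∫⁻ x, ENNReal.ofReal ((shMax f y κ x).toReal ^ p) := by
    refine lintegral_congr fun x => ?_
    rw [← ENNReal.ofReal_rpow_of_nonneg ENNReal.toReal_nonneg (by linarith),
      ENNReal.ofReal_toReal (hNtop x)]
  rw [e1, lintegral_rpow_eq_lintegral_meas_lt_mul _
    (Filter.Eventually.of_forall fun x => ENNReal.toReal_nonneg)
    hNm.ennreal_toReal.aemeasurable (by linarith)]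
  have step : ∀ s ∈ Ioi (0 : ℝ), volume {x | s < (shMax f y κ x).toReal} *
      ENNReal.ofReal (s ^ (p - 1)) ≤ C * ENNReal.ofReal κ⁻¹ * 2 *
        ∫⁻ x, (if ENNReal.ofReal s < 2 * v * f x then f x else 0) * ENNReal.ofReal (s ^ (p - 2)) := by
    intro s hs
    have hs0 : (0 : ℝ) < s := hs
    set g : Rn n → ℝ≥0∞ := fun x => if ENNReal.ofReal s < 2 * v * f x then f x else 0 with hg
    have hgm : Measurable g := by
      refine Measurable.ite ?_ hf.measurable measurable_const
      exact measurableSet_lt measurable_const (hf.measurable.const_mul _)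
    have hle : ∀ x, f x ≤ g x + ENNReal.ofReal s / (2 * v) := by
      intro x
      simp only [hg]
      split_ifs with h
      · exact le_self_add
      · rw [zero_add, ENNReal.le_div_iff_mul_le (Or.inl (by simp [hv0])) (Or.inl (by finiteness)),
          mul_comm]
        exact not_lt.1 h
    have hsub : {x | s < (shMax f y κ x).toReal} ⊆ {x | ENNReal.ofReal s / 2 < shMax g y κ x} := by
      intro x hx
      simp only [mem_setOf_eq] at hx ⊢
      have h1 := shMax_le_add f g _ hgm hle y κ x
      have h2 : ENNReal.ofReal s < shMax f y κ x := by
        rw [ENNReal.ofReal_lt_iff_lt_toReal hs0.le (hNtop x)]; exact hx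
      have h3 : ENNReal.ofReal s / (2 * v) * v = ENNReal.ofReal s / 2 := by
        rw [div_eq_mul_inv, ENNReal.mul_inv (by simp) (by simp), mul_assoc, mul_assoc,
          ENNReal.inv_mul_cancel hv0 hvtop, mul_one, div_eq_mul_inv]
      rw [← hv, h3] at h1
      by_contra hcon
      push Not at hcon
      have : shMax f y κ x ≤ ENNReal.ofReal s := by
        calc _ ≤ _ := h1
          _ ≤ ENNReal.ofReal s / 2 + ENNReal.ofReal s / 2 := by gcongr
          _ = _ := ENNReal.add_halves _
      exact absurd h2 (not_lt.2 this)
    have hw := hC y κ g (ENNReal.ofReal s / 2) hy hκ hκR hgm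
      (by simp [hs0]) (by finiteness)
    calc _ ≤ (C * ENNReal.ofReal κ⁻¹ * ((ENNReal.ofReal s / 2)⁻¹ * ∫⁻ x, g x)) *
        ENNReal.ofReal (s ^ (p - 1)) := by
          gcongr
          exact (measure_mono hsub).trans hw
      _ = C * ENNReal.ofReal κ⁻¹ * 2 * ((∫⁻ x, g x) * ENNReal.ofReal (s ^ (p - 2))) := by
          have h5 : (ENNReal.ofReal s / 2)⁻¹ = 2 * ENNReal.ofReal (s⁻¹) := by
            rw [ENNReal.inv_div (by simp) (by simp), div_eq_mul_inv, ENNReal.ofReal_inv_of_pos hs0]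
          have h6 : ENNReal.ofReal (s ^ (p - 2)) = ENNReal.ofReal s⁻¹ * ENNReal.ofReal (s ^ (p - 1)) := by
            rw [← ENNReal.ofReal_mul (by positivity)]
            congr 1
            rw [← Real.rpow_neg_one, ← Real.rpow_add hs0]
            congr 1; ring
          rw [h5, h6]; ring
      _ = _ := by rw [lintegral_mul_const _ hgm]
  have hmeas2 : Measurable (Function.uncurry fun (s : ℝ) (x : Rn n) =>
      (if ENNReal.ofReal s < 2 * v * f x then f x else 0) * ENNReal.ofReal (s ^ (p - 2))) := by
    refine Measurable.mul (Measurable.ite ?_ (hf.measurable.comp measurable_snd) measurable_const) ?_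
    · exact measurableSet_lt (by fun_prop) ((hf.measurable.comp measurable_snd).const_mul _)
    · fun_prop
  have inner : ∀ x, ∫⁻ s in Ioi (0 : ℝ), (if ENNReal.ofReal s < 2 * v * f x then f x else 0) *
      ENNReal.ofReal (s ^ (p - 2)) ≤ (2 * v) ^ (p - 1) * ENNReal.ofReal (p - 1)⁻¹ * f x ^ p := by
    intro x
    have hfx : f x ≠ ∞ := ne_top_of_le_ne_top ENNReal.coe_ne_top (hM x)
    have hT : 2 * v * f x ≠ ∞ := by finiteness
    set T := (2 * v * f x).toReal with hTdef
    have hT0 : 0 ≤ T := ENNReal.toReal_nonneg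
    calc _ ≤ ∫⁻ s in Ioi (0 : ℝ), (Ioc 0 T).indicator
          (fun s => f x * ENNReal.ofReal (s ^ (p - 2))) s := by
          refine setLIntegral_mono' measurableSet_Ioi fun s hs => ?_
          split_ifs with h
          · rw [indicator_of_mem]
            refine ⟨hs, ?_⟩
            exact ((ENNReal.ofReal_lt_iff_lt_toReal (le_of_lt hs) hT).1 h).le
          · simp
      _ ≤ ∫⁻ s, (Ioc 0 T).indicator (fun s => f x * ENNReal.ofReal (s ^ (p - 2))) s :=
          setLIntegral_le_lintegral _ _
      _ = f x * ENNReal.ofReal (T ^ (p - 2 + 1) / (p - 2 + 1)) := by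
          rw [lintegral_indicator measurableSet_Ioc, lintegral_const_mul _ (by fun_prop),
            lintegral_Ioc_rpow T hT0 _ (by linarith)]
      _ = _ := by
          have : p - 2 + 1 = p - 1 := by ring
          rw [this, div_eq_mul_inv, ENNReal.ofReal_mul (by positivity),
            ← ENNReal.ofReal_rpow_of_nonneg hT0 (by linarith), hTdef, ENNReal.ofReal_toReal hT,
            ENNReal.mul_rpow_of_nonneg _ _ (by linarith)]
          have h7 : f x ^ p = f x * f x ^ (p - 1) := by
            by_cases h0 : f x = 0
            · rw [h0, ENNReal.zero_rpow_of_pos (by linarith), zero_mul]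
            · nth_rewrite 2 [← ENNReal.rpow_one (f x)]
              rw [← ENNReal.rpow_add _ _ h0 hfx]; congr 1; ring
          rw [h7]; ring
  calc _ ≤ ENNReal.ofReal p * ∫⁻ s in Ioi (0 : ℝ), C * ENNReal.ofReal κ⁻¹ * 2 *
        ∫⁻ x, (if ENNReal.ofReal s < 2 * v * f x then f x else 0) *
          ENNReal.ofReal (s ^ (p - 2)) := by
        gcongr ENNReal.ofReal p * ?_
        exact setLIntegral_mono' measurableSet_Ioi step
    _ = ENNReal.ofReal p * (C * ENNReal.ofReal κ⁻¹ * 2 * ∫⁻ x, ∫⁻ s in Ioi (0 : ℝ),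
        (if ENNReal.ofReal s < 2 * v * f x then f x else 0) *
          ENNReal.ofReal (s ^ (p - 2))) := by
        rw [lintegral_const_mul _ hmeas2.lintegral_prod_right, lintegral_lintegral_swap
          hmeas2.aemeasurable]
    _ ≤ ENNReal.ofReal p * (C * ENNReal.ofReal κ⁻¹ * 2 * ∫⁻ x,
        (2 * v) ^ (p - 1) * ENNReal.ofReal (p - 1)⁻¹ * f x ^ p) := by
        gcongr with x
        exact inner x
    _ = _ := by
        rw [lintegral_const_mul _ (hf.measurable.pow_const _), hD]
        ring

/-- Measures dominated by superpositions of ball averages with controlled radii. -/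
def GoodMeas {n : ℕ} (μ : Measure (Rn n)) : Prop :=
  ∃ (R : ℝ) (m : Measure (Rn n × ℝ)), 0 < R ∧ SFinite m ∧
    (∀ᵐ q ∂m, ‖q.1‖ ≤ R ∧ 0 < q.2 ∧ q.2 ≤ R) ∧
    (∀ p : ℝ, 1 < p → ∫⁻ q, ENNReal.ofReal (q.2 ^ (-1 / p)) ∂m ≠ ∞) ∧
    ∀ F : Rn n → ℝ≥0∞, Measurable F →
      ∫⁻ y, F y ∂μ ≤ ∫⁻ q, (∫⁻ b in ball (0 : Rn n) 1, F (q.1 + q.2 • b)) ∂m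

set_option maxHeartbeats 1000000 in
theorem GoodMeas.maximal {n : ℕ} (hn : 1 ≤ n) {μ : Measure (Rn n)} (hμ : GoodMeas μ)
    (p : ℝ) (hp : 1 < p) :
    ∃ C : ℝ≥0, ∀ f : Rn n → ℝ≥0∞, Continuous f → (∃ M : ℝ≥0, ∀ x, f x ≤ M) →
      ∫⁻ x, (⨆ t ∈ Ioi (0 : ℝ), ∫⁻ y, f (x - t • y) ∂μ) ^ p ≤ C * ∫⁻ x, f x ^ p := by
  obtain ⟨R, m, hR, hm, hae, hIntegr, hdom⟩ := hμ
  obtain ⟨C, hC⟩ := shMax_strong n hn R hR p hp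
  set I := ∫⁻ q, ENNReal.ofReal (q.2 ^ (-1 / p)) ∂m with hI
  have hItop : I ≠ ∞ := hIntegr p hp
  have hp0 : 0 < p := by linarith
  have hpq : p.HolderConjugate (p / (p - 1)) := Real.HolderConjugate.conjExponent hp
  set p' := p / (p - 1) with hp'
  have hp'0 : 0 < p' := div_pos hp0 (by linarith)
  set D : ℝ≥0∞ := I ^ (p - 1) * (C * I) with hD
  have hDtop : D ≠ ∞ := by
    have : I ^ (p - 1) ≠ ∞ := ENNReal.rpow_ne_top_of_nonneg (by linarith) hItop
    finiteness
  refine ⟨D.toNNReal, ?_⟩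
  rw [ENNReal.coe_toNNReal hDtop]
  intro f hf hM
  have hmeas : Measurable fun q : (Rn n × ℝ) × Rn n => shMax f q.1.1 q.1.2 q.2 := shMax_measurable hf
  have h1 : ∀ x, (⨆ t ∈ Ioi (0 : ℝ), ∫⁻ y, f (x - t • y) ∂μ) ≤ ∫⁻ q, shMax f q.1 q.2 x ∂m := by
    intro x
    refine iSup₂_le fun t ht => ?_
    refine (hdom (fun y => f (x - t • y)) (hf.measurable.comp (by fun_prop))).trans ?_
    refine lintegral_mono fun q => ?_
    exact le_iSup₂ (f := fun t _ => ∫⁻ b in ball (0 : Rn n) 1, f (x - t • (q.1 + q.2 • b))) t ht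
  have h2 : ∀ x, (∫⁻ q, shMax f q.1 q.2 x ∂m) ^ p ≤
      I ^ (p - 1) * ∫⁻ q, ENNReal.ofReal (q.2 ^ (1 - 1 / p)) * shMax f q.1 q.2 x ^ p ∂m := by
    intro x
    have hmx : Measurable fun q : Rn n × ℝ => shMax f q.1 q.2 x :=
      hmeas.comp (f := fun q : Rn n × ℝ => (q, x)) (by fun_prop)
    set a : Rn n × ℝ → ℝ≥0∞ := fun q => ENNReal.ofReal (q.2 ^ ((1 - 1 / p) / p)) * shMax f q.1 q.2 x
    set b : Rn n × ℝ → ℝ≥0∞ := fun q => ENNReal.ofReal (q.2 ^ (-1 / p / p'))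
    have hab : ∫⁻ q, shMax f q.1 q.2 x ∂m = ∫⁻ q, (a * b) q ∂m := by
      refine lintegral_congr_ae ?_
      filter_upwards [hae] with q hq
      simp only [a, b, Pi.mul_apply]
      rw [mul_right_comm, ← ENNReal.ofReal_mul (Real.rpow_nonneg hq.2.1.le _), ← Real.rpow_add hq.2.1]
      have : (1 - 1 / p) / p + -1 / p / p' = 0 := by
        rw [hp']
        have : p - 1 ≠ 0 := by linarith
        field_simp
        ring
      rw [this, Real.rpow_zero, ENNReal.ofReal_one, one_mul]
    have hH := ENNReal.lintegral_mul_le_Lp_mul_Lq m hpq (f := a) (g := b)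
      (by apply Measurable.aemeasurable; fun_prop) (by apply Measurable.aemeasurable; fun_prop)
    have ha : ∫⁻ q, a q ^ p ∂m =
        ∫⁻ q, ENNReal.ofReal (q.2 ^ (1 - 1 / p)) * shMax f q.1 q.2 x ^ p ∂m := by
      refine lintegral_congr_ae ?_
      filter_upwards [hae] with q hq
      simp only [a]
      rw [ENNReal.mul_rpow_of_nonneg _ _ hp0.le, ENNReal.ofReal_rpow_of_nonneg
        (Real.rpow_nonneg hq.2.1.le _) hp0.le, ← Real.rpow_mul hq.2.1.le, div_mul_cancel₀ _ hp0.ne']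
    have hb : ∫⁻ q, b q ^ p' ∂m = I := by
      refine lintegral_congr_ae ?_
      filter_upwards [hae] with q hq
      simp only [b]
      rw [ENNReal.ofReal_rpow_of_nonneg
        (Real.rpow_nonneg hq.2.1.le _) hp'0.le, ← Real.rpow_mul hq.2.1.le, div_mul_cancel₀ _ hp'0.ne']
    rw [hab]
    refine (ENNReal.rpow_le_rpow hH hp0.le).trans (le_of_eq ?_)
    rw [ha, hb, ENNReal.mul_rpow_of_nonneg _ _ hp0.le, ← ENNReal.rpow_mul, ← ENNReal.rpow_mul,
      one_div_mul_cancel hp0.ne', ENNReal.rpow_one, mul_comm]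
    congr 2
    rw [hp']
    field_simp
  have hmeas3 : Measurable (Function.uncurry fun (x : Rn n) (q : Rn n × ℝ) =>
      ENNReal.ofReal (q.2 ^ (1 - 1 / p)) * shMax f q.1 q.2 x ^ p) := by
    refine Measurable.mul (by fun_prop) (Measurable.pow_const ?_ _)
    exact hmeas.comp (f := fun z : Rn n × (Rn n × ℝ) => (z.2, z.1)) (by fun_prop)
  calc _ ≤ ∫⁻ x, I ^ (p - 1) * (∫⁻ q, ENNReal.ofReal (q.2 ^ (1 - 1 / p)) * shMax f q.1 q.2 x ^ p ∂m) :=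
        lintegral_mono fun x => (ENNReal.rpow_le_rpow (h1 x) hp0.le).trans (h2 x)
    _ = I ^ (p - 1) * ∫⁻ q, (∫⁻ x, ENNReal.ofReal (q.2 ^ (1 - 1 / p)) * shMax f q.1 q.2 x ^ p) ∂m := by
        rw [lintegral_const_mul _ hmeas3.lintegral_prod_right, lintegral_lintegral_swap
          hmeas3.aemeasurable]
    _ ≤ I ^ (p - 1) * ∫⁻ q, ENNReal.ofReal (q.2 ^ (-1 / p)) * (C * ∫⁻ x, f x ^ p) ∂m := by
        gcongr I ^ (p - 1) * ?_
        refine lintegral_mono_ae ?_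
        filter_upwards [hae] with q hq
        have hmq : Measurable fun x : Rn n => shMax f q.1 q.2 x :=
          hmeas.comp (f := fun x : Rn n => (q, x)) (by fun_prop)
        rw [lintegral_const_mul _ (hmq.pow_const _)]
        calc _ ≤ ENNReal.ofReal (q.2 ^ (1 - 1 / p)) *
              (C * ENNReal.ofReal q.2⁻¹ * ∫⁻ x, f x ^ p) := by
              gcongr
              exact hC q.1 q.2 f hq.1 hq.2.1 hq.2.2 hf hM
          _ = (ENNReal.ofReal (q.2 ^ (1 - 1 / p)) * ENNReal.ofReal q.2⁻¹) *
              (C * ∫⁻ x, f x ^ p) := by ring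
          _ = _ := by
              rw [← ENNReal.ofReal_mul (Real.rpow_nonneg hq.2.1.le _), ← Real.rpow_neg_one,
                ← Real.rpow_add hq.2.1]
              congr 3
              ring
    _ = _ := by
        rw [lintegral_mul_const _ (by fun_prop), hD]
        ring

theorem GoodMeas.mono {n : ℕ} {μ ν : Measure (Rn n)} (hν : GoodMeas ν) (h : μ ≤ ν) : GoodMeas μ := by
  obtain ⟨R, m, hR, hm, hae, hIntegr, hdom⟩ := hν
  exact ⟨R, m, hR, hm, hae, hIntegr, fun F hF => (lintegral_mono' h le_rfl).trans (hdom F hF)⟩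

theorem GoodMeas.smul {n : ℕ} {μ : Measure (Rn n)} (hμ : GoodMeas μ) (c : ℝ≥0) :
    GoodMeas (c • μ) := by
  obtain ⟨R, m, hR, hm, hae, hIntegr, hdom⟩ := hμ
  refine ⟨R, c • m, hR, inferInstance, Measure.ae_smul_measure hae c, fun p hp => ?_, fun F hF => ?_⟩
  · rw [lintegral_smul_measure]
    exact ENNReal.mul_ne_top ENNReal.coe_ne_top (hIntegr p hp)
  · rw [lintegral_smul_measure, lintegral_smul_measure]
    exact mul_le_mul_right (hdom F hF) _

theorem GoodMeas.zero {n : ℕ} : GoodMeas (0 : Measure (Rn n)) :=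
  ⟨1, 0, one_pos, inferInstance, by simp, by simp, by simp⟩

theorem GoodMeas.add {n : ℕ} {μ ν : Measure (Rn n)} (hμ : GoodMeas μ) (hν : GoodMeas ν) :
    GoodMeas (μ + ν) := by
  obtain ⟨R, m, hR, hm, hae, hIntegr, hdom⟩ := hμ
  obtain ⟨R', m', hR', hm', hae', hIntegr', hdom'⟩ := hν
  refine ⟨max R R', m + m', lt_max_of_lt_left hR, inferInstance, ?_, fun p hp => ?_, fun F hF => ?_⟩
  · rw [ae_add_measure_iff]
    constructor
    · filter_upwards [hae] with q hq
      exact ⟨hq.1.trans (le_max_left _ _), hq.2.1, hq.2.2.trans (le_max_left _ _)⟩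
    · filter_upwards [hae'] with q hq
      exact ⟨hq.1.trans (le_max_right _ _), hq.2.1, hq.2.2.trans (le_max_right _ _)⟩
  · rw [lintegral_add_measure]
    exact ENNReal.add_ne_top.2 ⟨hIntegr p hp, hIntegr' p hp⟩
  · rw [lintegral_add_measure, lintegral_add_measure]
    exact add_le_add (hdom F hF) (hdom' F hF)

theorem enorm_le_eLpNorm_top {n : ℕ} (f : Rn n → ℝ) (hf : Continuous f) (x : Rn n) :
    ‖f x‖ₑ ≤ eLpNorm f ∞ volume := by
  have h1 : ∀ᵐ y, ‖f y‖ₑ ≤ eLpNorm f ∞ volume := by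
    rw [eLpNorm_exponent_top]
    exact enorm_ae_le_eLpNormEssSup f volume
  have hd : Dense {y | ‖f y‖ₑ ≤ eLpNorm f ∞ volume} := Measure.dense_of_ae h1
  have hc : IsClosed {y | ‖f y‖ₑ ≤ eLpNorm f ∞ volume} :=
    isClosed_le (by fun_prop) continuous_const
  have := hd.closure_eq
  rw [hc.closure_eq] at this
  have hx : x ∈ {y | ‖f y‖ₑ ≤ eLpNorm f ∞ volume} := this ▸ mem_univ x
  exact hx

theorem measurable_maximal {n : ℕ} (μ : Measure (Rn n)) (f : Rn n → ℝ≥0∞) (hf : Continuous f) :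
    Measurable fun x => ⨆ t ∈ Ioi (0 : ℝ), ∫⁻ y, f (x - t • y) ∂μ := by
  apply LowerSemicontinuous.measurable
  refine lowerSemicontinuous_iSup fun t => lowerSemicontinuous_iSup fun ht => ?_
  exact lowerSemicontinuous_lintegral_of_continuous μ (fun x y => f (x - t • y)) (by fun_prop) (by fun_prop)

theorem bimax_le {n : ℕ} (σ : Measure (E2 n)) (f g : Rn n → ℝ) (x : Rn n) :
    (⨆ t ∈ Ioi (0 : ℝ), ENNReal.ofReal |∫ p, f (x - t • p.1) * g (x - t • p.2) ∂σ|) ≤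
    ⨆ t ∈ Ioi (0 : ℝ), ∫⁻ p, ‖f (x - t • p.1)‖ₑ * ‖g (x - t • p.2)‖ₑ ∂σ := by
  refine iSup₂_mono fun t ht => ?_
  rw [← Real.norm_eq_abs, ofReal_norm]
  refine (enorm_integral_le_lintegral_enorm _).trans (le_of_eq ?_)
  simp only [enorm_mul]

theorem lintegral_fst_map {n : ℕ} (σ : Measure (E2 n)) (f : Rn n → ℝ≥0∞) (hf : Continuous f)
    (x : Rn n) (t : ℝ) : ∫⁻ p, f (x - t • p.1) ∂σ = ∫⁻ y, f (x - t • y) ∂(σ.map Prod.fst) := by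
  rw [lintegral_map (f := fun y => f (x - t • y)) (by
    exact (hf.comp (by fun_prop : Continuous fun y => x - t • y)).measurable) measurable_fst]

theorem lintegral_snd_map {n : ℕ} (σ : Measure (E2 n)) (f : Rn n → ℝ≥0∞) (hf : Continuous f)
    (x : Rn n) (t : ℝ) : ∫⁻ p, f (x - t • p.2) ∂σ = ∫⁻ y, f (x - t • y) ∂(σ.map Prod.snd) := by
  rw [lintegral_map (f := fun y => f (x - t • y)) (by
    exact (hf.comp (by fun_prop : Continuous fun y => x - t • y)).measurable) measurable_snd]

theorem bimax_holder {n : ℕ} (σ : Measure (E2 n)) (f g : Rn n → ℝ) (hf : Continuous f)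
    (hg : Continuous g) (s s' : ℝ) (hs : s.HolderConjugate s') (x : Rn n) :
    (⨆ t ∈ Ioi (0 : ℝ), ∫⁻ p, ‖f (x - t • p.1)‖ₑ * ‖g (x - t • p.2)‖ₑ ∂σ) ≤
    (⨆ t ∈ Ioi (0 : ℝ), ∫⁻ y, ‖f (x - t • y)‖ₑ ^ s ∂(σ.map Prod.fst)) ^ (1 / s) *
    (⨆ t ∈ Ioi (0 : ℝ), ∫⁻ y, ‖g (x - t • y)‖ₑ ^ s' ∂(σ.map Prod.snd)) ^ (1 / s') := by
  refine iSup₂_le fun t ht => ?_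
  have hs0 := hs.pos
  have hs0' := hs.symm.pos
  have h := ENNReal.lintegral_mul_le_Lp_mul_Lq σ hs
    (f := fun p : E2 n => ‖f (x - t • p.1)‖ₑ) (g := fun p : E2 n => ‖g (x - t • p.2)‖ₑ)
    (Continuous.aemeasurable (by fun_prop)) (Continuous.aemeasurable (by fun_prop))
  refine h.trans ?_
  have e1 := lintegral_fst_map σ (fun y => ‖f y‖ₑ ^ s) (by
    exact (ENNReal.continuous_rpow_const).comp (by fun_prop)) x t
  have e2 := lintegral_snd_map σ (fun y => ‖g y‖ₑ ^ s') (by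
    exact (ENNReal.continuous_rpow_const).comp (by fun_prop)) x t
  rw [e1, e2]
  refine mul_le_mul' (ENNReal.rpow_le_rpow ?_ (by positivity))
    (ENNReal.rpow_le_rpow ?_ (by positivity))
  · exact le_iSup₂ (f := fun t _ => ∫⁻ y, ‖f (x - t • y)‖ₑ ^ s ∂(σ.map Prod.fst)) t ht
  · exact le_iSup₂ (f := fun t _ => ∫⁻ y, ‖g (x - t • y)‖ₑ ^ s' ∂(σ.map Prod.snd)) t ht

set_option maxHeartbeats 1000000 in
theorem bimax_real {n : ℕ} (hn : 1 ≤ n) (σ : Measure (E2 n)) (h1 : GoodMeas (σ.map Prod.fst))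
    (h2 : GoodMeas (σ.map Prod.snd)) (p q r : ℝ) (hp : 1 < p) (hq : 1 < q) (hr : 1 < r)
    (hpqr : 1 / r = 1 / p + 1 / q) :
    ∃ C : ℝ≥0, ∀ f g : Rn n → ℝ, Continuous f → Continuous g → (∃ M : ℝ≥0, ∀ x, ‖f x‖ₑ ≤ M) →
      (∃ M : ℝ≥0, ∀ x, ‖g x‖ₑ ≤ M) →
      (∫⁻ x, (⨆ t ∈ Ioi (0 : ℝ), ∫⁻ p, ‖f (x - t • p.1)‖ₑ * ‖g (x - t • p.2)‖ₑ ∂σ) ^ r) ^ (1 / r) ≤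
        C * (∫⁻ x, ‖f x‖ₑ ^ p) ^ (1 / p) * (∫⁻ x, ‖g x‖ₑ ^ q) ^ (1 / q) := by
  have hp0 : 0 < p := by linarith
  have hq0 : 0 < q := by linarith
  have hr0 : 0 < r := by linarith
  have hr1 : 1 / r < 1 := by rw [div_lt_one hr0]; exact hr
  set θ : ℝ := (1 - 1 / p - 1 / q) / 2 with hθ
  have hθ0 : 0 < θ := by rw [hθ]; linarith
  have hip : 0 < 1 / p := by positivity
  have hiq : 0 < 1 / q := by positivity
  set s : ℝ := (1 / p + θ)⁻¹ with hs
  set s' : ℝ := (1 / q + θ)⁻¹ with hs'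
  have hs0 : 0 < s := by positivity
  have hs0' : 0 < s' := by positivity
  have hss : s.HolderConjugate s' := by
    rw [Real.holderConjugate_iff]
    constructor
    · rw [hs]
      apply (one_lt_inv₀ (by positivity)).2
      rw [hθ]; linarith
    · rw [hs, hs', inv_inv, inv_inv, hθ]; ring
  have hps : 1 < p / s := by
    rw [hs, div_inv_eq_mul, mul_add, mul_one_div_cancel hp0.ne']
    have : 0 < p * θ := by positivity
    linarith
  have hqs : 1 < q / s' := by
    rw [hs', div_inv_eq_mul, mul_add, mul_one_div_cancel hq0.ne']
    have : 0 < q * θ := by positivity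
    linarith
  obtain ⟨C1, hC1⟩ := h1.maximal hn (p / s) hps
  obtain ⟨C2, hC2⟩ := h2.maximal hn (q / s') hqs
  have hpr : (p / r).HolderConjugate (q / r) := by
    rw [Real.holderConjugate_iff]
    have hrp : r / p + r / q = 1 := by
      have : r * (1 / r) = r * (1 / p + 1 / q) := by rw [hpqr]
      rw [mul_one_div_cancel hr0.ne'] at this
      rw [this]; ring
    constructor
    · rw [lt_div_iff₀ hr0, one_mul]
      have : 0 < r / q := by positivity
      have h3 : r / p < 1 := by linarith
      rwa [div_lt_one hp0] at h3
    · rw [inv_div, inv_div]; exact hrp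
  refine ⟨C1 ^ (1 / p) * C2 ^ (1 / q), fun f g hf hg hMf hMg => ?_⟩
  have hFc : Continuous fun x => ‖f x‖ₑ ^ s := ENNReal.continuous_rpow_const.comp (by fun_prop)
  have hGc : Continuous fun x => ‖g x‖ₑ ^ s' := ENNReal.continuous_rpow_const.comp (by fun_prop)
  set MF : Rn n → ℝ≥0∞ := fun x => ⨆ t ∈ Ioi (0 : ℝ), ∫⁻ y, ‖f (x - t • y)‖ₑ ^ s ∂(σ.map Prod.fst)
    with hMF
  set MG : Rn n → ℝ≥0∞ := fun x => ⨆ t ∈ Ioi (0 : ℝ), ∫⁻ y, ‖g (x - t • y)‖ₑ ^ s' ∂(σ.map Prod.snd)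
    with hMG
  have mF : Measurable MF := measurable_maximal _ _ hFc
  have mG : Measurable MG := measurable_maximal _ _ hGc
  have bF : ∫⁻ x, MF x ^ (p / s) ≤ C1 * ∫⁻ x, ‖f x‖ₑ ^ p := by
    refine (hC1 _ hFc ?_).trans (le_of_eq ?_)
    · obtain ⟨M, hM⟩ := hMf
      refine ⟨M ^ s, fun x => ?_⟩
      rw [ENNReal.coe_rpow_of_nonneg _ hs0.le]
      exact ENNReal.rpow_le_rpow (hM x) hs0.le
    · congr 1
      refine lintegral_congr fun x => ?_
      rw [← ENNReal.rpow_mul, mul_div_cancel₀ _ hs0.ne']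
  have bG : ∫⁻ x, MG x ^ (q / s') ≤ C2 * ∫⁻ x, ‖g x‖ₑ ^ q := by
    refine (hC2 _ hGc ?_).trans (le_of_eq ?_)
    · obtain ⟨M, hM⟩ := hMg
      refine ⟨M ^ s', fun x => ?_⟩
      rw [ENNReal.coe_rpow_of_nonneg _ hs0'.le]
      exact ENNReal.rpow_le_rpow (hM x) hs0'.le
    · congr 1
      refine lintegral_congr fun x => ?_
      rw [← ENNReal.rpow_mul, mul_div_cancel₀ _ hs0'.ne']
  have hH := ENNReal.lintegral_mul_le_Lp_mul_Lq volume hpr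
    (f := fun x => MF x ^ (r / s)) (g := fun x => MG x ^ (r / s'))
    (mF.pow_const _).aemeasurable (mG.pow_const _).aemeasurable
  calc _ ≤ (∫⁻ x, ((fun x => MF x ^ (r / s)) * (fun x => MG x ^ (r / s'))) x) ^ (1 / r) := by
        refine ENNReal.rpow_le_rpow (lintegral_mono fun x => ?_) (by positivity)
        refine (ENNReal.rpow_le_rpow (bimax_holder σ f g hf hg s s' hss x) hr0.le).trans
          (le_of_eq ?_)
        rw [ENNReal.mul_rpow_of_nonneg _ _ hr0.le, ← ENNReal.rpow_mul, ← ENNReal.rpow_mul]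
        simp only [Pi.mul_apply, hMF, hMG]
        congr 2 <;> ring
    _ ≤ ((∫⁻ x, MF x ^ (p / s)) ^ (r / p) * (∫⁻ x, MG x ^ (q / s')) ^ (r / q)) ^ (1 / r) := by
        refine ENNReal.rpow_le_rpow (hH.trans (le_of_eq ?_)) (by positivity)
        simp only [← ENNReal.rpow_mul, one_div_div]
        have e1 : r / s * (p / r) = p / s := by field_simp
        have e2 : r / s' * (q / r) = q / s' := by field_simp
        rw [e1, e2]
    _ ≤ ((C1 * ∫⁻ x, ‖f x‖ₑ ^ p) ^ (r / p) * (C2 * ∫⁻ x, ‖g x‖ₑ ^ q) ^ (r / q)) ^ (1 / r) := by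
        gcongr
    _ = _ := by
        rw [ENNReal.mul_rpow_of_nonneg _ _ (by positivity : 0 ≤ 1 / r), ← ENNReal.rpow_mul,
          ← ENNReal.rpow_mul]
        have e1 : r / p * (1 / r) = 1 / p := by field_simp
        have e2 : r / q * (1 / r) = 1 / q := by field_simp
        rw [e1, e2, ENNReal.mul_rpow_of_nonneg _ _ hip.le, ENNReal.mul_rpow_of_nonneg _ _ hiq.le,
          ENNReal.coe_mul, ENNReal.coe_rpow_of_nonneg _ hip.le, ENNReal.coe_rpow_of_nonneg _ hiq.le]
        ring

theorem bimax_endpoint {n : ℕ} (hn : 1 ≤ n) (μ : Measure (Rn n)) (h1 : GoodMeas μ) (p : ℝ)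
    (hp : 1 < p) :
    ∃ C : ℝ≥0, ∀ f : Rn n → ℝ, Continuous f → (∃ M : ℝ≥0, ∀ x, ‖f x‖ₑ ≤ M) → ∀ (K : ℝ≥0∞)
      (M : Rn n → ℝ≥0∞), (∀ x, M x ≤ K * ⨆ t ∈ Ioi (0 : ℝ), ∫⁻ y, ‖f (x - t • y)‖ₑ ∂μ) →
      (∫⁻ x, M x ^ p) ^ (1 / p) ≤ C * (∫⁻ x, ‖f x‖ₑ ^ p) ^ (1 / p) * K := by
  obtain ⟨C1, hC1⟩ := h1.maximal hn p hp
  have hp0 : 0 < p := by linarith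
  have hip : 0 < 1 / p := by positivity
  refine ⟨C1 ^ (1 / p), fun f hf hM K M hMx => ?_⟩
  have b := hC1 (fun x => ‖f x‖ₑ) (by fun_prop) hM
  have mF := measurable_maximal μ (fun x => ‖f x‖ₑ) (by fun_prop)
  calc _ ≤ (∫⁻ x, K ^ p * (⨆ t ∈ Ioi (0 : ℝ), ∫⁻ y, ‖f (x - t • y)‖ₑ ∂μ) ^ p) ^ (1 / p) := by
        refine ENNReal.rpow_le_rpow (lintegral_mono fun x => ?_) hip.le
        rw [← ENNReal.mul_rpow_of_nonneg _ _ hp0.le]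
        exact ENNReal.rpow_le_rpow (hMx x) hp0.le
    _ = (K ^ p * ∫⁻ x, (⨆ t ∈ Ioi (0 : ℝ), ∫⁻ y, ‖f (x - t • y)‖ₑ ∂μ) ^ p) ^ (1 / p) := by
        rw [lintegral_const_mul _ (mF.pow_const _)]
    _ ≤ (K ^ p * (C1 * ∫⁻ x, ‖f x‖ₑ ^ p)) ^ (1 / p) := by gcongr
    _ = _ := by
        rw [ENNReal.mul_rpow_of_nonneg _ _ hip.le, ENNReal.mul_rpow_of_nonneg _ _ hip.le,
          ← ENNReal.rpow_mul, mul_one_div_cancel hp0.ne', ENNReal.rpow_one,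
          ENNReal.coe_rpow_of_nonneg _ hip.le]
        ring

theorem bimax_bound {n : ℕ} (hn : 1 ≤ n) (S : Set (E2 n)) (h1 : GoodMeas ((μSurf n S).map Prod.fst))
    (h2 : GoodMeas ((μSurf n S).map Prod.snd)) (hσ : μSurf n S univ ≤ 1)
    (p q r : ℝ≥0∞) (hp : 1 < p) (hq : 1 < q) (hr : 1 < r)
    (hpqr : 1 / r = 1 / p + 1 / q) :
    ∃ C : ℝ≥0, ∀ f g : 𝓢(Rn n, ℝ),
      lpNormE volume (biMaxS n S f g) r ≤
        C * eLpNorm (f : Rn n → ℝ) p volume * eLpNorm (g : Rn n → ℝ) q volume := by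
  have hbd : ∀ f : 𝓢(Rn n, ℝ), ∃ M : ℝ≥0, ∀ x, ‖f x‖ₑ ≤ M := by
    intro f
    obtain ⟨C, hC⟩ := f.decay 0 0
    refine ⟨C.toNNReal, fun x => ?_⟩
    have := hC.2 x
    simp only [pow_zero, norm_iteratedFDeriv_zero, one_mul] at this
    rw [← ofReal_norm]
    exact ENNReal.ofReal_le_ofReal this
  have hp0 : p ≠ 0 := (zero_lt_one.trans hp).ne'
  have hq0 : q ≠ 0 := (zero_lt_one.trans hq).ne'
  have hr0 : r ≠ 0 := (zero_lt_one.trans hr).ne'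
  have hxg : ∀ (f g : 𝓢(Rn n, ℝ)) x, biMaxS n S f g x ≤ eLpNorm (g : Rn n → ℝ) ∞ volume *
      ⨆ t ∈ Ioi (0 : ℝ), ∫⁻ y, ‖f (x - t • y)‖ₑ ∂((μSurf n S).map Prod.fst) := by
    intro f g x
    refine (bimax_le (μSurf n S) f g x).trans ?_
    simp only [ENNReal.mul_iSup]
    refine iSup₂_mono fun t ht => ?_
    rw [← lintegral_fst_map (μSurf n S) (fun y => ‖f y‖ₑ) (by fun_prop) x t, mul_comm,
      ← lintegral_mul_const _ (Continuous.measurable (by fun_prop))]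
    refine lintegral_mono fun z => mul_le_mul' le_rfl (enorm_le_eLpNorm_top g g.continuous _)
  have hxf : ∀ (f g : 𝓢(Rn n, ℝ)) x, biMaxS n S f g x ≤ eLpNorm (f : Rn n → ℝ) ∞ volume *
      ⨆ t ∈ Ioi (0 : ℝ), ∫⁻ y, ‖g (x - t • y)‖ₑ ∂((μSurf n S).map Prod.snd) := by
    intro f g x
    refine (bimax_le (μSurf n S) f g x).trans ?_
    simp only [ENNReal.mul_iSup]
    refine iSup₂_mono fun t ht => ?_
    rw [← lintegral_snd_map (μSurf n S) (fun y => ‖g y‖ₑ) (by fun_prop) x t,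
      ← lintegral_const_mul _ (Continuous.measurable (by fun_prop))]
    refine lintegral_mono fun z => mul_le_mul' (enorm_le_eLpNorm_top f f.continuous _) le_rfl
  by_cases hpt : p = ∞
  · subst hpt
    have hrq : r = q := by simpa using hpqr
    subst hrq
    by_cases hrt : r = ∞
    · subst hrt
      refine ⟨1, fun f g => ?_⟩
      simp only [lpNormE, ENNReal.top_ne_zero, if_false, if_true]
      refine essSup_le_of_ae_le _ (Filter.Eventually.of_forall fun x => ?_)
      refine (hxf f g x).trans ?_
      rw [ENNReal.coe_one, one_mul]
      refine mul_le_mul' le_rfl (iSup₂_le fun t ht => ?_)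
      rw [← lintegral_snd_map (μSurf n S) (fun y => ‖g y‖ₑ) (by fun_prop) x t]
      refine (lintegral_mono fun z => enorm_le_eLpNorm_top g g.continuous _).trans ?_
      rw [lintegral_const]
      exact mul_le_of_le_one_right' hσ
    · have hr1 : 1 < r.toReal := by
        rw [← ENNReal.toReal_one]; exact (ENNReal.toReal_lt_toReal (by simp) hrt).2 hr
      obtain ⟨C, hC⟩ := bimax_endpoint hn _ h2 r.toReal hr1
      refine ⟨C, fun f g => ?_⟩
      have := hC g g.continuous (hbd g) _ _ (hxf f g)
      rw [eLpNorm_eq_lintegral_rpow_enorm_toReal hr0 hrt]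
      simp only [lpNormE, hr0, hrt, if_false]
      rw [mul_right_comm]
      exact this
  · by_cases hqt : q = ∞
    · subst hqt
      have hrq : r = p := by simpa using hpqr
      subst hrq
      have hr1 : 1 < r.toReal := by
        rw [← ENNReal.toReal_one]; exact (ENNReal.toReal_lt_toReal (by simp) hpt).2 hr
      obtain ⟨C, hC⟩ := bimax_endpoint hn _ h1 r.toReal hr1
      refine ⟨C, fun f g => ?_⟩
      have := hC f f.continuous (hbd f) _ _ (hxg f g)
      rw [eLpNorm_eq_lintegral_rpow_enorm_toReal hr0 hpt]
      simp only [lpNormE, hr0, hpt, if_false]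
      exact this
    · have hrt : r ≠ ∞ := by
        rintro rfl
        simp at hpqr
        have h5 : p⁻¹ = 0 := (add_eq_zero.1 hpqr.symm).1
        exact hpt (ENNReal.inv_eq_zero.1 h5)
      have hp1 : 1 < p.toReal := by
        rw [← ENNReal.toReal_one]; exact (ENNReal.toReal_lt_toReal (by simp) hpt).2 hp
      have hq1 : 1 < q.toReal := by
        rw [← ENNReal.toReal_one]; exact (ENNReal.toReal_lt_toReal (by simp) hqt).2 hq
      have hr1 : 1 < r.toReal := by
        rw [← ENNReal.toReal_one]; exact (ENNReal.toReal_lt_toReal (by simp) hrt).2 hr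
      have hreal : 1 / r.toReal = 1 / p.toReal + 1 / q.toReal := by
        have := congrArg ENNReal.toReal hpqr
        rw [ENNReal.toReal_add (by simp [hp0]) (by simp [hq0])] at this
        simpa using this
      obtain ⟨C, hC⟩ := bimax_real hn _ h1 h2 _ _ _ hp1 hq1 hr1 hreal
      refine ⟨C, fun f g => ?_⟩
      have := hC f g f.continuous g.continuous (hbd f) (hbd g)
      rw [eLpNorm_eq_lintegral_rpow_enorm_toReal hp0 hpt,
        eLpNorm_eq_lintegral_rpow_enorm_toReal hq0 hqt]
      simp only [lpNormE, hr0, hrt, if_false]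
      refine le_trans (ENNReal.rpow_le_rpow (lintegral_mono fun x => ?_) (by positivity)) this
      exact ENNReal.rpow_le_rpow (bimax_le _ _ _ _) (by positivity)

theorem whitney {H Q : Type*} [NormedAddCommGroup H] [NormedSpace ℝ H] [FiniteDimensional ℝ H]
    [MeasurableSpace H] [BorelSpace H] (ν : Measure H) [ν.IsAddHaarMeasure]
    [NormedAddCommGroup Q] [NormedSpace ℝ Q] [FiniteDimensional ℝ Q]
    [MeasurableSpace Q] [BorelSpace Q] (lam : Measure Q) [lam.IsAddHaarMeasure] :
    ∃ C : ℝ≥0, ∀ (ι : Q →L[ℝ] H) (V V' : Set H) (κ : H → ℝ), MeasurableSet V → MeasurableSet V' →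
      Measurable κ →
      (∀ w ∈ V, 0 < κ w ∧ ∀ q, ‖q‖ < κ w / 2 →
        w - ι q ∈ V' ∧ ‖q‖ < κ (w - ι q) ∧ κ (w - ι q) ≤ 2 * κ w) →
      ∀ G : H → ℝ≥0∞, Measurable G →
      ∫⁻ w in V, G w ∂ν ≤ C * ∫⁻ w in V', ENNReal.ofReal ((κ w ^ Module.finrank ℝ Q)⁻¹) *
        (∫⁻ q in ball 0 (κ w), G (w + ι q) ∂lam) ∂ν := by
  set d := Module.finrank ℝ Q with hd
  set b : ℝ≥0∞ := lam (ball 0 1) with hb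
  have hb0 : b ≠ 0 := (measure_ball_pos lam 0 one_pos).ne'
  have hbt : b ≠ ∞ := measure_ball_lt_top.ne
  set c : ℝ≥0∞ := ENNReal.ofReal ((4 ^ d : ℝ)⁻¹) * b with hc
  have hc0 : c ≠ 0 := by
    refine mul_ne_zero ?_ hb0
    rw [Ne, ENNReal.ofReal_eq_zero, not_le]; positivity
  have hct : c ≠ ∞ := ENNReal.mul_ne_top ENNReal.ofReal_ne_top hbt
  refine ⟨c⁻¹.toNNReal, fun ι V V' κ hV hV' hκ hyp G hG => ?_⟩
  rw [ENNReal.coe_toNNReal (ENNReal.inv_ne_top.2 hc0)]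
  rw [← ENNReal.div_eq_inv_mul, ENNReal.le_div_iff_mul_le (Or.inl hc0) (Or.inl hct)]
  -- the kernel
  set k : H → Q → ℝ≥0∞ := fun w q =>
    V'.indicator 1 w * ({z : H × Q | ‖z.2‖ < κ z.1}.indicator 1 (w, q)) *
      ENNReal.ofReal ((κ w ^ d)⁻¹) with hk
  have hkm : Measurable (Function.uncurry k) := by
    simp only [hk]
    refine ((Measurable.comp (measurable_one.indicator hV') measurable_fst).mul
      (measurable_one.indicator ?_)).mul ?_
    · exact measurableSet_lt (by fun_prop) (by fun_prop)
    · fun_prop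
  have e1 : ∫⁻ w in V', ENNReal.ofReal ((κ w ^ d)⁻¹) *
        (∫⁻ q in ball 0 (κ w), G (w + ι q) ∂lam) ∂ν =
      ∫⁻ w, (∫⁻ q, k w q * G (w + ι q) ∂lam) ∂ν := by
    rw [← lintegral_indicator hV']
    refine lintegral_congr fun w => ?_
    by_cases hw : w ∈ V'
    · rw [indicator_of_mem hw, ← lintegral_indicator measurableSet_ball, ← lintegral_const_mul]
      · refine lintegral_congr fun q => ?_
        simp only [hk, indicator_of_mem hw, Pi.one_apply, one_mul]
        by_cases hq : ‖q‖ < κ w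
        · rw [indicator_of_mem (by simpa using hq), indicator_of_mem (by simpa using hq)]
          simp
        · rw [indicator_of_notMem (by simpa using hq), indicator_of_notMem (by simpa using hq)]
          simp
      · exact (hG.comp (by fun_prop)).indicator measurableSet_ball
    · rw [indicator_of_notMem hw]
      simp [hk, indicator_of_notMem hw]
  have hkq : ∀ q, Measurable fun w => k w q := fun q =>
    hkm.comp (f := fun w => ((w, q) : H × Q)) (by fun_prop)
  have hkm2 : Measurable fun z : H × Q => k (z.1 - ι z.2) z.2 :=
    hkm.comp (f := fun z : H × Q => ((z.1 - ι z.2, z.2) : H × Q)) (by fun_prop)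
  have e2 : ∫⁻ w, (∫⁻ q, k w q * G (w + ι q) ∂lam) ∂ν =
      ∫⁻ w, (∫⁻ q, k (w - ι q) q ∂lam) * G w ∂ν := by
    rw [lintegral_lintegral_swap]
    · have : ∀ q, ∫⁻ w, k w q * G (w + ι q) ∂ν = ∫⁻ w, k (w - ι q) q * G w ∂ν := by
        intro q
        rw [← lintegral_add_right_eq_self (μ := ν) (fun w => k (w - ι q) q * G w) (ι q)]
        simp
      simp_rw [this]
      rw [lintegral_lintegral_swap]
      · refine lintegral_congr fun w => ?_
        rw [lintegral_mul_const]
        exact hkm2.comp (f := fun q => ((w, q) : H × Q)) (by fun_prop)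
      · refine Measurable.aemeasurable ?_
        refine Measurable.mul ?_ (hG.comp measurable_snd)
        exact hkm2.comp (f := fun z : Q × H => ((z.2, z.1) : H × Q)) (by fun_prop)
    · refine Measurable.aemeasurable ?_
      exact hkm.mul (hG.comp (by fun_prop))
  rw [e1, e2, ← lintegral_mul_const _ hG, ← lintegral_indicator hV]
  refine lintegral_mono fun w => ?_
  by_cases hw : w ∈ V
  · rw [indicator_of_mem hw, mul_comm]
    refine mul_le_mul' ?_ le_rfl
    obtain ⟨hκ0, hyp⟩ := hyp w hw
    calc c = ENNReal.ofReal (((2 * κ w) ^ d)⁻¹) * lam (ball 0 (κ w / 2)) := by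
          rw [Measure.addHaar_ball_of_pos _ _ (by positivity), ← mul_assoc,
            ← ENNReal.ofReal_mul (by positivity), hc]
          congr 2
          rw [← hd, div_pow, mul_pow]
          have : (4 : ℝ) ^ d = 2 ^ d * 2 ^ d := by rw [← mul_pow]; norm_num
          rw [this]
          have := hκ0.ne'
          field_simp
      _ = ∫⁻ q in ball 0 (κ w / 2), ENNReal.ofReal (((2 * κ w) ^ d)⁻¹) ∂lam := by
          rw [setLIntegral_const]
      _ ≤ ∫⁻ q in ball 0 (κ w / 2), k (w - ι q) q ∂lam := by
          refine setLIntegral_mono' measurableSet_ball fun q hq => ?_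
          obtain ⟨h1, h2, h3⟩ := hyp q (by simpa using hq)
          simp only [hk, indicator_of_mem h1, Pi.one_apply, one_mul]
          rw [indicator_of_mem (by simpa using h2)]
          simp only [Pi.one_apply, one_mul]
          refine ENNReal.ofReal_le_ofReal ?_
          have h4 : 0 < κ (w - ι q) := (norm_nonneg q).trans_lt h2
          gcongr
      _ ≤ _ := setLIntegral_le_lintegral _ _
  · rw [indicator_of_notMem hw]; simp

theorem lintegral_ball_scale' {n : ℕ} (f : Rn n → ℝ≥0∞) (hf : Measurable f) (c : Rn n) (r : ℝ)
    (hr : 0 < r) :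
    ∫⁻ u in ball c r, f u = ENNReal.ofReal (r ^ n) * ∫⁻ b in ball (0 : Rn n) 1, f (c + r • b) := by
  rw [← lintegral_ball_scale f hf c r hr]
  congr 1
  rw [← lintegral_indicator measurableSet_ball, ← lintegral_indicator measurableSet_ball,
    ← lintegral_neg_eq_self]
  refine lintegral_congr fun b => ?_
  by_cases hb : ‖b‖ < 1
  · rw [indicator_of_mem (by simpa using hb), indicator_of_mem (by simpa using hb)]
    simp [sub_eq_add_neg]
  · rw [indicator_of_notMem (by simpa using hb), indicator_of_notMem (by simpa using hb)]

theorem goodMeas_of_whitney {n : ℕ} {H : Type*} [NormedAddCommGroup H] [NormedSpace ℝ H]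
    [FiniteDimensional ℝ H]
    [MeasurableSpace H] [BorelSpace H] (ν : Measure H) [ν.IsAddHaarMeasure]
    (ι : Rn n →L[ℝ] H) (V V' : Set H) (κ : H → ℝ) (ρ : H → ℝ) (Y : H → Rn n) (L R : ℝ)
    (hV : MeasurableSet V) (hV' : MeasurableSet V') (hκ : Measurable κ) (hρ : Measurable ρ)
    (hY : Measurable Y) (hL : 0 < L) (hR : 0 < R)
    (hyp : ∀ w ∈ V, 0 < κ w ∧ ∀ q, ‖q‖ < κ w / 2 →
        w - ι q ∈ V' ∧ ‖q‖ < κ (w - ι q) ∧ κ (w - ι q) ≤ 2 * κ w)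
    (hbd : ∀ w ∈ V', ‖Y w‖ ≤ R ∧ 0 < κ w ∧ κ w ≤ R)
    (hloc : ∀ w ∈ V', ∀ F : Rn n → ℝ≥0∞, Measurable F →
      ∫⁻ q in ball 0 (κ w), F (Y (w + ι q)) ≤
        ENNReal.ofReal (ρ w) * ∫⁻ y in ball (Y w) (L * κ w), F y)
    (hIntegr : ∀ p : ℝ, 1 < p →
      ∫⁻ w in V', ENNReal.ofReal (ρ w) * ENNReal.ofReal (κ w ^ (-1 / p)) ∂ν ≠ ∞) :
    GoodMeas ((ν.restrict V).map Y) := by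
  obtain ⟨C, hC⟩ := whitney ν (volume : Measure (Rn n))
  set D : ℝ≥0∞ := C * ENNReal.ofReal (L ^ n) with hD
  have hDt : D ≠ ∞ := ENNReal.mul_ne_top ENNReal.coe_ne_top ENNReal.ofReal_ne_top
  set T : H → Rn n × ℝ := fun w => (Y w, L * κ w) with hT
  have hTm : Measurable T := by fun_prop
  have hρm : Measurable fun w => D * ENNReal.ofReal (ρ w) := by fun_prop
  set m0 : Measure H := (ν.restrict V').withDensity (fun w => D * ENNReal.ofReal (ρ w)) with hm0
  refine ⟨max R (L * R), m0.map T, lt_max_of_lt_left hR, ?_, ?_, fun p hp => ?_, fun F hF => ?_⟩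
  · infer_instance
  · rw [ae_map_iff hTm.aemeasurable]
    · have : ∀ᵐ w ∂(ν.restrict V'), ‖(T w).1‖ ≤ max R (L * R) ∧ 0 < (T w).2 ∧
          (T w).2 ≤ max R (L * R) := by
        refine (ae_restrict_iff' hV').2 (Filter.Eventually.of_forall fun w hw => ?_)
        obtain ⟨h1, h2, h3⟩ := hbd w hw
        refine ⟨h1.trans (le_max_left _ _), mul_pos hL h2, le_trans ?_ (le_max_right _ _)⟩
        exact mul_le_mul_of_nonneg_left h3 hL.le
      exact (withDensity_absolutelyContinuous _ _).ae_le this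
    · exact (measurableSet_le (f := fun q : Rn n × ℝ => ‖q.1‖) (by fun_prop) measurable_const).inter
        ((measurableSet_lt measurable_const (measurable_snd (α := Rn n) (β := ℝ))).inter
          (measurableSet_le (measurable_snd (α := Rn n) (β := ℝ)) measurable_const))
  · rw [lintegral_map (by fun_prop) hTm, hm0,
      lintegral_withDensity_eq_lintegral_mul _ hρm (by fun_prop)]
    have : ∫⁻ w in V', ((fun w => D * ENNReal.ofReal (ρ w)) *
        fun w => ENNReal.ofReal ((T w).2 ^ (-1 / p))) w ∂ν =
        (D * ENNReal.ofReal (L ^ (-1 / p))) *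
        ∫⁻ w in V', ENNReal.ofReal (ρ w) * ENNReal.ofReal (κ w ^ (-1 / p)) ∂ν := by
      rw [← lintegral_const_mul _ (by fun_prop)]
      refine setLIntegral_congr_fun hV' fun w hw => ?_
      obtain ⟨h1, h2, h3⟩ := hbd w hw
      simp only [Pi.mul_apply, hT]
      rw [Real.mul_rpow hL.le h2.le, ENNReal.ofReal_mul (by positivity)]
      ring
    rw [this]
    exact ENNReal.mul_ne_top (ENNReal.mul_ne_top hDt ENNReal.ofReal_ne_top) (hIntegr p hp)
  · have hFm : Measurable fun q : Rn n × ℝ => ∫⁻ b in ball (0 : Rn n) 1, F (q.1 + q.2 • b) := by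
      refine Measurable.lintegral_prod_right' (f := fun z : (Rn n × ℝ) × Rn n =>
        F (z.1.1 + z.1.2 • z.2)) ?_
      exact hF.comp (by fun_prop)
    rw [lintegral_map hF hY, lintegral_map hFm hTm, hm0,
      lintegral_withDensity_eq_lintegral_mul _ hρm (g := fun w => ∫⁻ b in ball (0 : Rn n) 1,
        F ((T w).1 + (T w).2 • b)) (hFm.comp hTm)]
    refine (hC ι V V' κ hV hV' hκ hyp (fun w => F (Y w)) (hF.comp hY)).trans ?_
    rw [← lintegral_const_mul' _ _ ENNReal.coe_ne_top]
    refine setLIntegral_mono' hV' fun w hw => ?_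
    obtain ⟨h1, h2, h3⟩ := hbd w hw
    simp only [Pi.mul_apply, hT]
    calc _ ≤ (C : ℝ≥0∞) * (ENNReal.ofReal ((κ w ^ n)⁻¹) * (ENNReal.ofReal (ρ w) *
          ∫⁻ y in ball (Y w) (L * κ w), F y)) := by
          rw [finrank_euclideanSpace_fin]
          gcongr
          exact hloc w hw F hF
      _ = C * ((ENNReal.ofReal ((κ w ^ n)⁻¹) * ENNReal.ofReal ((L * κ w) ^ n)) *
          (ENNReal.ofReal (ρ w) * ∫⁻ b in ball (0 : Rn n) 1, F (Y w + (L * κ w) • b))) := by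
          rw [lintegral_ball_scale' F hF (Y w) (L * κ w) (by positivity)]
          ring
      _ = _ := by
          rw [← ENNReal.ofReal_mul (by positivity), mul_pow, mul_comm (L ^ n),
            inv_mul_cancel_left₀ (by positivity), hD]
          ring

theorem shear_change_of_var {n : ℕ} (u : Rn n) (hu : ‖u‖ = 1) (ψ : Rn n → ℝ)
    (hψ : Differentiable ℝ ψ) (c : Rn n) (κ a L : ℝ) (ha : 0 < a) (hL : 0 ≤ L)
    (hκ : 0 < κ)
    (hA : ∀ q, ‖q‖ < κ → a ≤ |fderiv ℝ ψ q u|)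
    (hlip : ∀ q, ‖q‖ < κ → |ψ q - ψ 0| ≤ L * κ) (F : Rn n → ℝ≥0∞) :
    ∫⁻ q in ball (0 : Rn n) κ, F (c + (q - inner ℝ u q • u) + ψ q • u) ≤
      ENNReal.ofReal a⁻¹ * ∫⁻ y in ball (c + ψ 0 • u) ((3 + L) * κ), F y := by
  have huu : inner ℝ u u = 1 := by rw [real_inner_self_eq_norm_sq, hu]; norm_num
  set g : Rn n → Rn n := fun q => c + (q - inner ℝ u q • u) + ψ q • u with hg
  set g' : Rn n → (Rn n →L[ℝ] Rn n) := fun q =>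
    (ContinuousLinearMap.id ℝ (Rn n) - (innerSL ℝ u).smulRight u) + (fderiv ℝ ψ q).smulRight u
    with hg'
  have hderiv : ∀ q, HasFDerivAt g (g' q) q := by
    intro q
    refine HasFDerivAt.add (HasFDerivAt.const_add c (HasFDerivAt.sub (hasFDerivAt_id q) ?_)) ?_
    · exact (innerSL ℝ u).hasFDerivAt.smul_const u
    · exact (hψ q).hasFDerivAt.smul_const u
  have hdet : ∀ q, (g' q).det = fderiv ℝ ψ q u := by
    intro q
    have : ((g' q : Rn n →L[ℝ] Rn n) : Rn n →ₗ[ℝ] Rn n) =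
        LinearMap.transvection ((fderiv ℝ ψ q - innerSL ℝ u : Rn n →L[ℝ] ℝ) : Rn n →ₗ[ℝ] ℝ) u := by
      ext x i
      simp [hg', LinearMap.transvection]
      ring
    rw [ContinuousLinearMap.det, this, LinearMap.transvection.det]
    simp [hu]
  have hinj : InjOn g (ball 0 κ) := by
    intro q hq q' hq' h
    by_contra hne
    set s : ℝ := inner ℝ u (q' - q) - (ψ q' - ψ q) with hs
    have hqq : q' = q + s • u := by
      have h2 : q' - q = s • u := by
        have h3 : g q' - g q = 0 := by rw [h, sub_self]
        have h4 : g q' - g q = (q' - q) - s • u := by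
          simp only [hg, hs, inner_sub_right]
          module
        rw [h4] at h3
        exact sub_eq_zero.1 h3
      rw [← h2]; abel
    have hs0 : s ≠ 0 := by
      rintro h0
      rw [h0] at hqq
      exact hne (by rw [hqq]; simp)
    have hψe : ψ q' = ψ q := by
      have : inner ℝ u (q' - q) = s := by
        rw [hqq, add_sub_cancel_left, inner_smul_right, huu, mul_one]
      have h5 : s = s - (ψ q' - ψ q) := by
        nth_rewrite 1 [hs]; rw [this]
      linarith
    have hline : ∀ τ : ℝ, HasDerivAt (fun τ : ℝ => ψ (q + τ • (s • u)))
        (fderiv ℝ ψ (q + τ • (s • u)) (s • u)) τ := by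
      intro τ
      have h6 : HasDerivAt (fun τ : ℝ => q + τ • (s • u)) (s • u) τ := by
        simpa using ((hasDerivAt_id τ).smul_const (s • u)).const_add q
      exact (hψ _).hasFDerivAt.comp_hasDerivAt τ h6
    obtain ⟨τ, hτ, hτ0⟩ := exists_hasDerivAt_eq_zero (f := fun τ : ℝ => ψ (q + τ • (s • u)))
      zero_lt_one (fun τ _ => (hline τ).continuousAt.continuousWithinAt)
      (by simp only [zero_smul, add_zero, one_smul]; rw [← hqq, hψe]) (fun τ _ => hline τ)
    have hmem : q + τ • (s • u) ∈ ball (0 : Rn n) κ := by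
      have h7 : s • u = q' - q := by rw [hqq]; abel
      rw [h7]
      exact (convex_ball (0 : Rn n) κ).add_smul_sub_mem hq hq' ⟨hτ.1.le, hτ.2.le⟩
    have h8 := hA _ (by simpa using hmem)
    rw [map_smul, smul_eq_mul] at hτ0
    rcases mul_eq_zero.1 hτ0 with h9 | h9
    · exact hs0 h9
    · rw [h9, abs_zero] at h8; linarith
  have hcv := lintegral_image_eq_lintegral_abs_det_fderiv_mul volume
    (measurableSet_ball (x := (0 : Rn n)) (ε := κ))
    (fun q _ => (hderiv q).hasFDerivWithinAt) hinj F
  have himg : g '' ball 0 κ ⊆ ball (c + ψ 0 • u) ((3 + L) * κ) := by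
    rintro _ ⟨q, hq, rfl⟩
    have hq' : ‖q‖ < κ := by simpa using hq
    rw [mem_ball, dist_eq_norm]
    have : g q - (c + ψ 0 • u) = q - inner ℝ u q • u + (ψ q - ψ 0) • u := by
      simp only [hg]; module
    rw [this]
    have h1 : ‖inner ℝ u q • u‖ ≤ ‖q‖ := by
      rw [norm_smul, hu, mul_one]
      simpa [hu] using norm_inner_le_norm (𝕜 := ℝ) u q
    have h2 : ‖(ψ q - ψ 0) • u‖ ≤ L * κ := by
      rw [norm_smul, hu, mul_one]; exact hlip q hq'
    calc _ ≤ ‖q‖ + ‖inner ℝ u q • u‖ + ‖(ψ q - ψ 0) • u‖ :=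
          (norm_add_le _ _).trans (add_le_add_left (norm_sub_le _ _) _)
      _ < _ := by nlinarith
  calc _ ≤ ∫⁻ q in ball (0 : Rn n) κ, ENNReal.ofReal a⁻¹ *
        (ENNReal.ofReal |(g' q).det| * F (g q)) := by
        refine setLIntegral_mono' measurableSet_ball fun q hq => ?_
        rw [← mul_assoc, ← ENNReal.ofReal_mul (by positivity), hdet]
        have h1 : (1 : ℝ≥0∞) ≤ ENNReal.ofReal (a⁻¹ * |fderiv ℝ ψ q u|) := by
          rw [ENNReal.one_le_ofReal]
          have := hA q (by simpa using hq)
          rw [inv_mul_eq_div, le_div_iff₀ ha]; linarith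
        calc _ = 1 * F (g q) := by rw [one_mul]
          _ ≤ _ := mul_le_mul' h1 le_rfl
    _ = ENNReal.ofReal a⁻¹ * ∫⁻ y in g '' ball 0 κ, F y := by
        rw [lintegral_const_mul' _ _ ENNReal.ofReal_ne_top, hcv]
    _ ≤ _ := by
        gcongr

theorem lintegral_abs_rpow_ne_top (c : ℝ) (hc : c < 1) :
    ∫⁻ x in Icc (-1 : ℝ) 1, ENNReal.ofReal |x| ^ (-c) ≠ ∞ := by
  have h1 : ∫⁻ x in Ioc (0 : ℝ) 1, ENNReal.ofReal |x| ^ (-c) ≠ ∞ := by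
    have : ∫⁻ x in Ioc (0 : ℝ) 1, ENNReal.ofReal |x| ^ (-c) =
        ∫⁻ x in Ioc (0 : ℝ) 1, ENNReal.ofReal (x ^ (-c)) := by
      refine setLIntegral_congr_fun measurableSet_Ioc fun x hx => ?_
      rw [abs_of_pos hx.1, ENNReal.ofReal_rpow_of_pos hx.1]
    rw [this, lintegral_Ioc_rpow 1 zero_le_one (-c) (by linarith)]
    exact ENNReal.ofReal_ne_top
  have h2 : ∫⁻ x in Ico (-1 : ℝ) 0, ENNReal.ofReal |x| ^ (-c) =
      ∫⁻ x in Ioc (0 : ℝ) 1, ENNReal.ofReal |x| ^ (-c) := by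
    rw [← lintegral_indicator measurableSet_Ico, ← lintegral_indicator measurableSet_Ioc,
      ← lintegral_neg_eq_self]
    refine lintegral_congr fun x => ?_
    by_cases hx : x ∈ Ioc (0 : ℝ) 1
    · have hx' : -x ∈ Ico (-1 : ℝ) 0 := ⟨by linarith [hx.2], by linarith [hx.1]⟩
      rw [indicator_of_mem hx, indicator_of_mem hx', abs_neg]
    · rw [indicator_of_notMem hx, indicator_of_notMem]
      exact fun h => hx ⟨by linarith [h.2], by linarith [h.1]⟩
  have hsub : Icc (-1 : ℝ) 1 ⊆ (Ico (-1) 0 ∪ Ioc 0 1) ∪ {0} := by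
    intro x hx
    rcases lt_trichotomy x 0 with h | h | h
    · exact Or.inl (Or.inl ⟨hx.1, h⟩)
    · exact Or.inr h
    · exact Or.inl (Or.inr ⟨h, hx.2⟩)
  refine ne_top_of_le_ne_top ?_ ((lintegral_mono_set hsub).trans ((lintegral_union_le _ _ _).trans
    (add_le_add_left (lintegral_union_le _ _ _) _)))
  rw [h2]
  simp [h1]

theorem lintegral_abs_rpow_prod_ne_top (c : ℝ) (hc : c < 1) :
    ∫⁻ z in Icc (-1 : ℝ) 1 ×ˢ Icc (-1 : ℝ) 1,
      ENNReal.ofReal |z.1| ^ (-c) * ENNReal.ofReal |z.2| ^ (-c) ≠ ∞ := by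
  rw [Measure.volume_eq_prod, ← Measure.prod_restrict,
    lintegral_prod_mul (f := fun x => ENNReal.ofReal |x| ^ (-c))
      (g := fun x => ENNReal.ofReal |x| ^ (-c)) (by fun_prop) (by fun_prop)]
  exact ENNReal.mul_ne_top (lintegral_abs_rpow_ne_top c hc) (lintegral_abs_rpow_ne_top c hc)

theorem local_integrability {H : Type*} [NormedAddCommGroup H] [NormedSpace ℝ H]
    [FiniteDimensional ℝ H]
    [MeasurableSpace H] [BorelSpace H] (ν : Measure H) [ν.IsAddHaarMeasure] (A B : H → ℝ)
    (hAm : Measurable A) (hBm : Measurable B)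
    (h0 : H) (hA : ContDiffAt ℝ 1 A h0) (hB : ContDiffAt ℝ 1 B h0) (hA0 : A h0 = 0) (hB0 : B h0 = 0)
    (u1 u2 : H) (h11 : fderiv ℝ A h0 u1 = 1) (h12 : fderiv ℝ A h0 u2 = 0)
    (h21 : fderiv ℝ B h0 u1 = 0) (h22 : fderiv ℝ B h0 u2 = 1) :
    ∃ ε > 0, ∀ c : ℝ, c < 1 →
      ∫⁻ w in ball h0 ε, ENNReal.ofReal |A w| ^ (-c) * ENNReal.ofReal |B w| ^ (-c) ∂ν ≠ ∞ := by
  set T : H → ℝ × ℝ := fun h => (A h, B h) with hT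
  have hTc : ContDiffAt ℝ 1 T h0 := hA.prodMk hB
  set ι : ℝ × ℝ →L[ℝ] H := (ContinuousLinearMap.fst ℝ ℝ ℝ).smulRight u1 +
    (ContinuousLinearMap.snd ℝ ℝ ℝ).smulRight u2 with hι
  have hTf : fderiv ℝ T h0 = (fderiv ℝ A h0).prod (fderiv ℝ B h0) :=
    (hA.differentiableAt one_ne_zero).fderiv_prodMk (hB.differentiableAt one_ne_zero)
  have hid : (fderiv ℝ T h0).comp ι = ContinuousLinearMap.id ℝ (ℝ × ℝ) := by
    rw [hTf]
    ext <;> simp [hι, h11, h12, h21, h22]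
  have hcont : ContinuousAt (fun h => (fderiv ℝ T h).comp ι) h0 := by
    have h1 : ContinuousAt (fderiv ℝ T) h0 :=
      (hTc.fderiv_right (m := 0) (by norm_num)).continuousAt
    exact h1.clm_comp continuousAt_const
  have ev1 : ∀ᶠ h in nhds h0, ‖(fderiv ℝ T h).comp ι - ContinuousLinearMap.id ℝ (ℝ × ℝ)‖ < 1 / 2 := by
    have h2 : ContinuousAt
        (fun h => ‖(fderiv ℝ T h).comp ι - ContinuousLinearMap.id ℝ (ℝ × ℝ)‖) h0 :=
      (hcont.sub continuousAt_const).norm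
    refine h2.eventually_lt continuousAt_const ?_
    rw [hid]; simp
  have ev2 : ∀ᶠ h in nhds h0, 1 / 2 < |((fderiv ℝ T h).comp ι).det| := by
    have h2 : ContinuousAt (fun h => |((fderiv ℝ T h).comp ι).det|) h0 :=
      (ContinuousLinearMap.continuous_det.continuousAt.comp hcont).abs
    refine continuousAt_const.eventually_lt h2 ?_
    rw [hid]
    rw [ContinuousLinearMap.det]
    simp
    norm_num
  have ev3 : ∀ᶠ h in nhds h0, DifferentiableAt ℝ T h := by
    filter_upwards [hTc.eventually (by simp)] with h hh
    exact hh.differentiableAt one_ne_zero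
  have ev4 : ∀ᶠ h in nhds h0, |A h| < 1 :=
    (hA.continuousAt.abs).eventually_lt continuousAt_const (by simp [hA0])
  have ev5 : ∀ᶠ h in nhds h0, |B h| < 1 :=
    (hB.continuousAt.abs).eventually_lt continuousAt_const (by simp [hB0])
  obtain ⟨δ, hδ, hball⟩ := Metric.eventually_nhds_iff_ball.1
    (ev1.and (ev2.and (ev3.and (ev4.and ev5))))
  set M : ℝ := ‖ι‖ + 1 with hM
  have hM0 : 0 < M := by positivity
  set k : ℝ := δ / (1 + 2 * M) with hk
  have hk0 : 0 < k := by positivity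
  have hkδ : k + 2 * (M * k) = δ := by
    rw [hk]; field_simp
  have hιq : ∀ q, ‖q‖ < k → ‖ι q‖ < M * k := by
    intro q hq
    have h1 := ι.le_opNorm q
    have h2 : ‖ι‖ * ‖q‖ ≤ ‖ι‖ * k := by gcongr
    rw [hM]; nlinarith
  refine ⟨k, hk0, fun c hc => ?_⟩
  obtain ⟨C, hC⟩ := whitney ν (volume : Measure (ℝ × ℝ))
  have hw := hC ι (ball h0 k) (ball h0 (k + M * k)) (fun _ => k) measurableSet_ball
    measurableSet_ball measurable_const ?_ (fun w => ENNReal.ofReal |A w| ^ (-c) *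
      ENNReal.ofReal |B w| ^ (-c)) (by fun_prop)
  swap
  · intro w hw
    refine ⟨hk0, fun q hq => ⟨?_, by linarith, by linarith⟩⟩
    rw [mem_ball, dist_eq_norm] at hw ⊢
    have h3 := hιq q (by linarith)
    calc ‖w - ι q - h0‖ = ‖(w - h0) - ι q‖ := by congr 1; abel
      _ ≤ ‖w - h0‖ + ‖ι q‖ := norm_sub_le _ _
      _ < _ := by linarith
  refine ne_top_of_le_ne_top ?_ hw
  set J := ∫⁻ z in Icc (-1 : ℝ) 1 ×ˢ Icc (-1 : ℝ) 1,
      ENNReal.ofReal |z.1| ^ (-c) * ENNReal.ofReal |z.2| ^ (-c) with hJ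
  have hJt : J ≠ ∞ := lintegral_abs_rpow_prod_ne_top c hc
  have key : ∀ w ∈ ball h0 (k + M * k), ∫⁻ q in ball (0 : ℝ × ℝ) k,
      ENNReal.ofReal |A (w + ι q)| ^ (-c) * ENNReal.ofReal |B (w + ι q)| ^ (-c) ≤
      2 * J := by
    intro w hw
    have hin : ∀ q ∈ ball (0 : ℝ × ℝ) k, w + ι q ∈ ball h0 δ := by
      intro q hq
      have h3 := hιq q (by simpa using hq)
      rw [mem_ball, dist_eq_norm] at hw ⊢
      calc ‖w + ι q - h0‖ = ‖(w - h0) + ι q‖ := by congr 1; abel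
        _ ≤ ‖w - h0‖ + ‖ι q‖ := norm_add_le _ _
        _ < _ := by linarith
    set g : ℝ × ℝ → ℝ × ℝ := fun q => T (w + ι q) with hg
    set g' : ℝ × ℝ → (ℝ × ℝ →L[ℝ] ℝ × ℝ) := fun q => (fderiv ℝ T (w + ι q)).comp ι with hg'
    have hgd : ∀ q ∈ ball (0 : ℝ × ℝ) k, HasFDerivAt g (g' q) q := by
      intro q hq
      have := (hball _ (hin q hq)).2.2.1.hasFDerivAt
      exact HasFDerivAt.comp q this (ι.hasFDerivAt.const_add w)
    have hinj : InjOn g (ball (0 : ℝ × ℝ) k) := by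
      intro x hx y hy hxy
      have h1 := (convex_ball (0 : ℝ × ℝ) k).norm_image_sub_le_of_norm_hasFDerivWithin_le
        (f := fun q => g q - q) (f' := fun q => g' q - ContinuousLinearMap.id ℝ (ℝ × ℝ))
        (C := 1 / 2)
        (fun q hq => ((hgd q hq).sub (hasFDerivAt_id q)).hasFDerivWithinAt)
        (fun q hq => (hball _ (hin q hq)).1.le) hx hy
      rw [hxy] at h1
      have h2 : g y - y - (g y - x) = -(y - x) := by abel
      rw [h2, norm_neg] at h1
      have h3 : ‖y - x‖ = 0 := by
        have := norm_nonneg (y - x)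
        linarith
      exact (sub_eq_zero.1 (norm_eq_zero.1 h3)).symm
    have hcv := lintegral_image_eq_lintegral_abs_det_fderiv_mul volume
      (measurableSet_ball (x := (0 : ℝ × ℝ)) (ε := k))
      (fun q hq => (hgd q hq).hasFDerivWithinAt) hinj
      (fun z => ENNReal.ofReal |z.1| ^ (-c) * ENNReal.ofReal |z.2| ^ (-c))
    have himg : g '' ball 0 k ⊆ Icc (-1 : ℝ) 1 ×ˢ Icc (-1 : ℝ) 1 := by
      rintro _ ⟨q, hq, rfl⟩
      have h4 := hball _ (hin q hq)
      exact ⟨abs_le.1 h4.2.2.2.1.le, abs_le.1 h4.2.2.2.2.le⟩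
    calc _ ≤ ∫⁻ q in ball (0 : ℝ × ℝ) k, 2 * (ENNReal.ofReal |(g' q).det| *
          (ENNReal.ofReal |(g q).1| ^ (-c) * ENNReal.ofReal |(g q).2| ^ (-c))) := by
          refine setLIntegral_mono' measurableSet_ball fun q hq => ?_
          have h5 := (hball _ (hin q hq)).2.1
          have h6 : (1 : ℝ≥0∞) ≤ 2 * ENNReal.ofReal |(g' q).det| := by
            have : (2 : ℝ≥0∞) = ENNReal.ofReal 2 := by simp
            rw [this, ← ENNReal.ofReal_mul (by norm_num), ENNReal.one_le_ofReal]
            simp only [hg']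
            linarith
          rw [← mul_assoc]
          calc _ = 1 * (ENNReal.ofReal |(g q).1| ^ (-c) * ENNReal.ofReal |(g q).2| ^ (-c)) := by
                rw [one_mul]
            _ ≤ _ := mul_le_mul' h6 le_rfl
      _ = 2 * ∫⁻ z in g '' ball 0 k, ENNReal.ofReal |z.1| ^ (-c) * ENNReal.ofReal |z.2| ^ (-c) := by
          rw [lintegral_const_mul' _ _ (by simp), hcv]
      _ ≤ 2 * J := by
          gcongr
          exact lintegral_mono_set himg
  refine ENNReal.mul_ne_top ENNReal.coe_ne_top ?_
  refine ne_top_of_le_ne_top ?_ (setLIntegral_mono' measurableSet_ball fun w hw =>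
    mul_le_mul' le_rfl (key w hw))
  rw [setLIntegral_const]
  refine ENNReal.mul_ne_top (ENNReal.mul_ne_top ENNReal.ofReal_ne_top
    (ENNReal.mul_ne_top (by simp) hJt)) measure_ball_lt_top.ne

theorem rpow_weight_bound (a b c p : ℝ) (ha : 0 < a) (hc : 0 < c) (hp : 1 < p)
    (hab : b ≤ 3 * a) :
    ENNReal.ofReal (a / 2)⁻¹ * ENNReal.ofReal ((c * a) ^ (-1 / p)) ≤
    ENNReal.ofReal (2 * c ^ (-1 / p) * 3 ^ ((1 + 1 / p) / 2)) *
      (ENNReal.ofReal a ^ (-((1 + 1 / p) / 2)) * ENNReal.ofReal b ^ (-((1 + 1 / p) / 2))) := by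
  set e : ℝ := (1 + 1 / p) / 2 with he
  have hp0 : 0 < p := by linarith
  have he0 : 0 < e := by positivity
  have h1 : ENNReal.ofReal ((3 * a) ^ (-e)) ≤ ENNReal.ofReal b ^ (-e) := by
    rw [← ENNReal.ofReal_rpow_of_pos (by positivity), ENNReal.rpow_neg, ENNReal.rpow_neg]
    exact ENNReal.inv_le_inv.2 (ENNReal.rpow_le_rpow (ENNReal.ofReal_le_ofReal hab) he0.le)
  refine le_trans ?_ (mul_le_mul' le_rfl (mul_le_mul' le_rfl h1))
  rw [ENNReal.ofReal_rpow_of_pos ha, ← ENNReal.ofReal_mul (by positivity),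
    ← ENNReal.ofReal_mul (by positivity), ← ENNReal.ofReal_mul (by positivity)]
  refine ENNReal.ofReal_le_ofReal (le_of_eq ?_)
  rw [Real.mul_rpow hc.le ha.le, Real.mul_rpow (by norm_num) ha.le]
  have h3 : (3 : ℝ) ^ e * 3 ^ (-e) = 1 := by rw [← Real.rpow_add (by norm_num)]; simp
  have h4 : a ^ (-e) * a ^ (-e) = a⁻¹ * a ^ (-1 / p) := by
    rw [← Real.rpow_neg_one a, ← Real.rpow_add ha, ← Real.rpow_add ha]
    congr 1
    rw [he]; ring
  calc (a / 2)⁻¹ * (c ^ (-1 / p) * a ^ (-1 / p)) = 2 * c ^ (-1 / p) * (a⁻¹ * a ^ (-1 / p)) := by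
        rw [inv_div]; ring
    _ = 2 * c ^ (-1 / p) * (3 ^ e * 3 ^ (-e)) * (a ^ (-e) * a ^ (-e)) := by rw [h3, h4]; ring
    _ = _ := by ring

set_option maxHeartbeats 1000000 in
theorem good_half {n : ℕ} {H : Type*} [NormedAddCommGroup H] [NormedSpace ℝ H]
    [FiniteDimensional ℝ H]
    [MeasurableSpace H] [BorelSpace H] (ν : Measure H) [ν.IsAddHaarMeasure]
    (φ : H → ℝ) (hφ : ContDiff ℝ 2 φ) (pr : H →L[ℝ] Rn n) (j : Rn n →L[ℝ] H) (u : Rn n)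
    (hu : ‖u‖ = 1) (hprj : ∀ q, pr (j q) = q - inner ℝ u q • u) (hju : j u = 0)
    (v1 v2 : H) (hv1 : pr v1 = 0) (h0 : H) (hA0 : fderiv ℝ φ h0 v1 = 0)
    (ε : ℝ) (hε : 0 < ε)
    (hIntegr : ∀ c : ℝ, c < 1 → ∫⁻ w in ball h0 ε, ENNReal.ofReal |fderiv ℝ φ w v1| ^ (-c) *
      ENNReal.ofReal |fderiv ℝ φ w v2| ^ (-c) ∂ν ≠ ∞) :
    ∃ δ > 0, GoodMeas ((ν.restrict (ball h0 δ ∩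
      {w | |fderiv ℝ φ w v2| ≤ |fderiv ℝ φ w v1| ∧ fderiv ℝ φ w v1 ≠ 0})).map
        (fun h => pr h + φ h • u)) := by
  set A : H → ℝ := fun w => fderiv ℝ φ w v1 with hA
  set B : H → ℝ := fun w => fderiv ℝ φ w v2 with hB
  have hAc : ContDiff ℝ 1 A := (hφ.fderiv_right (m := 1) (by norm_num)).clm_apply contDiff_const
  have hBc : ContDiff ℝ 1 B := (hφ.fderiv_right (m := 1) (by norm_num)).clm_apply contDiff_const
  have hφ1 : ContDiff ℝ 1 φ := hφ.of_le (by norm_num)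
  have huu : inner ℝ u u = 1 := by rw [real_inner_self_eq_norm_sq, hu]; norm_num
  set Y : H → Rn n := fun h => pr h + φ h • u with hY
  have hYc : Continuous Y := by
    have := hφ.continuous
    fun_prop
  have hAm : Measurable A := hAc.continuous.measurable
  have hBm : Measurable B := hBc.continuous.measurable
  set ι : Rn n →L[ℝ] H := j + (innerSL ℝ u).smulRight v1 with hι
  have hιu : ι u = v1 := by simp [hι, hju, hu]
  have hprι : ∀ q, pr (ι q) = q - inner ℝ u q • u := by
    intro q; simp [hι, hprj, hv1]
  obtain ⟨KA, tA, htA, hKA⟩ := hAc.contDiffAt.exists_lipschitzOnWith (x := h0)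
  obtain ⟨KB, tB, htB, hKB⟩ := hBc.contDiffAt.exists_lipschitzOnWith (x := h0)
  obtain ⟨Kφ, tφ, htφ, hKφ⟩ := hφ1.contDiffAt.exists_lipschitzOnWith (x := h0)
  have evA : ∀ᶠ h in nhds h0, |A h| < 1 :=
    (hAc.continuous.continuousAt.abs).eventually_lt continuousAt_const (by simp [hA, hA0])
  have evY : ∀ᶠ h in nhds h0, ‖Y h‖ < ‖Y h0‖ + 1 :=
    (hYc.continuousAt.norm).eventually_lt continuousAt_const (by linarith)
  obtain ⟨δ1, hδ1, hball1⟩ := Metric.eventually_nhds_iff_ball.1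
    (evA.and (evY.and ((Filter.eventually_of_mem htA fun x hx => hx).and
      ((Filter.eventually_of_mem htB fun x hx => hx).and
        (Filter.eventually_of_mem htφ fun x hx => hx)))))
  set δ : ℝ := min δ1 ε with hδ
  have hδ0 : 0 < δ := lt_min hδ1 hε
  have hball : ∀ y ∈ ball h0 δ, |A y| < 1 ∧ ‖Y y‖ < ‖Y h0‖ + 1 ∧ y ∈ tA ∧ y ∈ tB ∧ y ∈ tφ :=
    fun y hy => hball1 y (ball_subset_ball (min_le_left _ _) hy)
  set L : ℝ := KA + KB + Kφ with hL
  have hL0 : 0 ≤ L := by positivity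
  have lipA : ∀ x ∈ ball h0 δ, ∀ y ∈ ball h0 δ, |A x - A y| ≤ L * ‖x - y‖ := by
    intro x hx y hy
    have := hKA.dist_le_mul x (hball x hx).2.2.1 y (hball y hy).2.2.1
    rw [Real.dist_eq, dist_eq_norm] at this
    refine this.trans (mul_le_mul_of_nonneg_right ?_ (norm_nonneg _))
    rw [hL]; have := KB.coe_nonneg; have := Kφ.coe_nonneg; linarith
  have lipB : ∀ x ∈ ball h0 δ, ∀ y ∈ ball h0 δ, |B x - B y| ≤ L * ‖x - y‖ := by
    intro x hx y hy
    have := hKB.dist_le_mul x (hball x hx).2.2.2.1 y (hball y hy).2.2.2.1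
    rw [Real.dist_eq, dist_eq_norm] at this
    refine this.trans (mul_le_mul_of_nonneg_right ?_ (norm_nonneg _))
    rw [hL]; have := KA.coe_nonneg; have := Kφ.coe_nonneg; linarith
  have lipφ : ∀ x ∈ ball h0 δ, ∀ y ∈ ball h0 δ, |φ x - φ y| ≤ L * ‖x - y‖ := by
    intro x hx y hy
    have := hKφ.dist_le_mul x (hball x hx).2.2.2.2 y (hball y hy).2.2.2.2
    rw [Real.dist_eq, dist_eq_norm] at this
    refine this.trans (mul_le_mul_of_nonneg_right ?_ (norm_nonneg _))
    rw [hL]; have := KA.coe_nonneg; have := KB.coe_nonneg; linarith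
  set M : ℝ := ‖ι‖ + 1 with hM
  have hM0 : 0 < M := by positivity
  have hιq : ∀ q, ‖ι q‖ ≤ M * ‖q‖ := fun q =>
    (ι.le_opNorm q).trans (mul_le_mul_of_nonneg_right (by rw [hM]; linarith) (norm_nonneg _))
  set c : ℝ := min 1 (min (1 / (4 * (L + 1) * M)) (δ / (4 * M))) with hc
  have hc0 : 0 < c := by
    rw [hc]; refine lt_min one_pos (lt_min ?_ ?_) <;> positivity
  have hc1 : c ≤ 1 := min_le_left _ _
  have hcL : c * (L * M) ≤ 1 / 4 := by
    have h1 : c ≤ 1 / (4 * (L + 1) * M) := (min_le_right _ _).trans (min_le_left _ _)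
    rw [le_div_iff₀ (by positivity)] at h1
    nlinarith [mul_pos hc0 hM0]
  have hcδ : c * M ≤ δ / 4 := by
    have h1 : c ≤ δ / (4 * M) := (min_le_right _ _).trans (min_le_right _ _)
    rw [le_div_iff₀ (by positivity)] at h1
    linarith
  -- variation estimate
  have hvar : ∀ w ∈ ball h0 (δ / 2), ∀ w', ∀ τ : ℝ, ‖w' - w‖ ≤ M * τ → τ ≤ c * |A w| →
      w' ∈ ball h0 δ ∧ |A w' - A w| ≤ |A w| / 4 ∧ |B w' - B w| ≤ |A w| / 4 := by
    intro w hw w' τ hτ hτc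
    have hwδ : w ∈ ball h0 δ := ball_subset_ball (by linarith) hw
    have hA1 : |A w| < 1 := (hball w hwδ).1
    have h1 : M * τ ≤ M * (c * |A w|) := by gcongr
    have h2 : M * (c * |A w|) ≤ δ / 4 := by
      have : M * (c * |A w|) ≤ M * (c * 1) := by gcongr
      linarith
    have hw' : w' ∈ ball h0 δ := by
      rw [mem_ball, dist_eq_norm] at hw ⊢
      calc ‖w' - h0‖ = ‖(w' - w) + (w - h0)‖ := by congr 1; abel
        _ ≤ ‖w' - w‖ + ‖w - h0‖ := norm_add_le _ _
        _ < _ := by linarith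
    have h3 : L * ‖w' - w‖ ≤ |A w| / 4 := by
      calc L * ‖w' - w‖ ≤ L * (M * (c * |A w|)) := by gcongr; linarith
        _ = (c * (L * M)) * |A w| := by ring
        _ ≤ 1 / 4 * |A w| := by gcongr
        _ = _ := by ring
    exact ⟨hw', (lipA w' hw' w hwδ).trans h3, (lipB w' hw' w hwδ).trans h3⟩
  set V' : Set H := ball h0 (δ / 2) ∩ {w | |B w| ≤ 3 * |A w| ∧ A w ≠ 0} with hV'
  refine ⟨δ / 4, by positivity, ?_⟩
  refine goodMeas_of_whitney ν ι (ball h0 (δ / 4) ∩ {w | |B w| ≤ |A w| ∧ A w ≠ 0}) V'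
    (fun w => c * |A w|) (fun w => (|A w| / 2)⁻¹) Y (3 + L * M) (‖Y h0‖ + 1) ?_ ?_ (by fun_prop)
    (by fun_prop) hYc.measurable (by positivity) (by positivity) ?_ ?_ ?_ ?_
  · refine measurableSet_ball.inter ((measurableSet_le (f := fun w => |B w|) (g := fun w => |A w|)
      (by fun_prop) (by fun_prop)).inter ?_)
    exact (hAm (measurableSet_singleton 0)).compl
  · refine measurableSet_ball.inter ((measurableSet_le (f := fun w => |B w|) (g := fun w => 3 * |A w|)
      (by fun_prop) (by fun_prop)).inter ?_)
    exact (hAm (measurableSet_singleton 0)).compl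
  · rintro w ⟨hw, hBA, hAne⟩
    have hApos : 0 < |A w| := abs_pos.2 hAne
    refine ⟨by positivity, fun q hq => ?_⟩
    have hw2 : w ∈ ball h0 (δ / 2) := ball_subset_ball (by linarith) hw
    have hcA : 0 < c * |A w| := by positivity
    obtain ⟨h1, h2, h3⟩ := hvar w hw2 (w - ι q) ‖q‖ (by simpa using hιq q) (by linarith)
    have h4 : |A w| - |A (w - ι q)| ≤ |A w| / 4 :=
      (abs_sub_abs_le_abs_sub _ _).trans (by rw [abs_sub_comm]; exact h2)
    have h5 : |A (w - ι q)| - |A w| ≤ |A w| / 4 := (abs_sub_abs_le_abs_sub _ _).trans h2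
    have h6 : |B (w - ι q)| - |B w| ≤ |A w| / 4 := (abs_sub_abs_le_abs_sub _ _).trans h3
    refine ⟨⟨?_, ?_, ?_⟩, ?_, ?_⟩
    · rw [mem_ball, dist_eq_norm] at hw ⊢
      have hA1 : |A w| < 1 := (hball w (ball_subset_ball (by linarith) hw2)).1
      have h7 : M * ‖q‖ ≤ δ / 4 := by
        have : ‖q‖ ≤ c := by nlinarith
        calc M * ‖q‖ ≤ M * c := by gcongr
          _ ≤ δ / 4 := by linarith
      calc ‖w - ι q - h0‖ = ‖(w - h0) - ι q‖ := by congr 1; abel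
        _ ≤ ‖w - h0‖ + ‖ι q‖ := norm_sub_le _ _
        _ < _ := by linarith [hιq q]
    · have hBA' : |B w| ≤ |A w| := hBA
      linarith
    · intro h; rw [h, abs_zero] at h4; linarith
    · have : c * (3 / 4 * |A w|) ≤ c * |A (w - ι q)| := by gcongr; linarith
      linarith
    · have : c * |A (w - ι q)| ≤ c * (5 / 4 * |A w|) := by gcongr; linarith
      linarith
  · rintro w ⟨hw, hBA, hAne⟩
    have hApos : 0 < |A w| := abs_pos.2 hAne
    obtain ⟨h1, h2, -⟩ := hball w (ball_subset_ball (by linarith) hw)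
    refine ⟨h2.le, by positivity, ?_⟩
    have := norm_nonneg (Y h0)
    nlinarith
  · rintro w ⟨hw, hBA, hAne⟩ F hF
    have hApos : 0 < |A w| := abs_pos.2 hAne
    have hwδ : w ∈ ball h0 δ := ball_subset_ball (by linarith) hw
    have hd : ∀ q, HasFDerivAt (fun q => φ (w + ι q)) ((fderiv ℝ φ (w + ι q)).comp ι) q := by
      intro q
      have := ((hφ1.differentiable one_ne_zero) (w + ι q)).hasFDerivAt
      exact HasFDerivAt.comp q this (ι.hasFDerivAt.const_add w)
    have key := shear_change_of_var u hu (fun q => φ (w + ι q)) (fun q => (hd q).differentiableAt)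
      (pr w) (c * |A w|) (|A w| / 2) (L * M) (by positivity) (by positivity) (by positivity) ?_ ?_ F
    · have e1 : ∀ q, Y (w + ι q) = pr w + (q - inner ℝ u q • u) + φ (w + ι q) • u := by
        intro q; simp only [hY, map_add, hprι]
      simp only [e1]
      refine key.trans (le_of_eq ?_)
      simp only [map_zero, add_zero, hY]
    · intro q hq
      rw [(hd q).fderiv, ContinuousLinearMap.comp_apply, hιu]
      obtain ⟨h1, h2, h3⟩ := hvar w hw (w + ι q) ‖q‖ (by simpa using hιq q) hq.le
      have h4 : |A w| - |A (w + ι q)| ≤ |A w| / 4 :=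
        (abs_sub_abs_le_abs_sub _ _).trans (by rw [abs_sub_comm]; exact h2)
      change |A w| / 2 ≤ |A (w + ι q)|
      linarith
    · intro q hq
      obtain ⟨h1, h2, h3⟩ := hvar w hw (w + ι q) ‖q‖ (by simpa using hιq q) hq.le
      simp only [map_zero, add_zero]
      refine (lipφ _ h1 w hwδ).trans ?_
      rw [add_sub_cancel_left, mul_assoc]
      gcongr
      exact (hιq q).trans (by gcongr)
  · intro p hp
    have hp0 : 0 < p := by linarith
    have h1 := hIntegr ((1 + 1 / p) / 2) (by
      have : 1 / p < 1 := by rw [div_lt_one hp0]; exact hp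
      linarith)
    set K := ENNReal.ofReal (2 * c ^ (-1 / p) * 3 ^ ((1 + 1 / p) / 2)) with hK
    refine ne_top_of_le_ne_top (ENNReal.mul_ne_top (ENNReal.ofReal_ne_top : K ≠ ∞) h1) ?_
    rw [← lintegral_const_mul _ (by fun_prop)]
    refine le_trans (setLIntegral_mono' (?_ : MeasurableSet V') fun w hw => ?_)
      (lintegral_mono_set (?_ : V' ⊆ ball h0 ε))
    · refine measurableSet_ball.inter ((measurableSet_le (f := fun w => |B w|) (g := fun w => 3 * |A w|)
      (by fun_prop) (by fun_prop)).inter ?_)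
      exact (hAm (measurableSet_singleton 0)).compl
    · exact rpow_weight_bound |A w| |B w| c p (abs_pos.2 hw.2.2) hc0 hp hw.2.1
    · intro w hw
      refine ball_subset_ball ?_ hw.1
      have : δ ≤ ε := min_le_right _ _
      linarith

theorem good_case2 {n : ℕ} {H : Type*} [NormedAddCommGroup H] [NormedSpace ℝ H]
    [FiniteDimensional ℝ H]
    [MeasurableSpace H] [BorelSpace H] (ν : Measure H) [ν.IsAddHaarMeasure]
    (φ : H → ℝ) (hφ : ContDiff ℝ 2 φ) (pr : H →L[ℝ] Rn n) (j : Rn n →L[ℝ] H) (u : Rn n)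
    (hu : ‖u‖ = 1) (hprj : ∀ q, pr (j q) = q - inner ℝ u q • u) (hju : j u = 0)
    (v1 v2 : H) (hv1 : pr v1 = 0) (hv2 : pr v2 = 0) (h0 : H) (hA0 : fderiv ℝ φ h0 v1 = 0)
    (hB0 : fderiv ℝ φ h0 v2 = 0)
    (u1 u2 : H) (h11 : fderiv ℝ (fun w => fderiv ℝ φ w v1) h0 u1 = 1)
    (h12 : fderiv ℝ (fun w => fderiv ℝ φ w v1) h0 u2 = 0)
    (h21 : fderiv ℝ (fun w => fderiv ℝ φ w v2) h0 u1 = 0)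
    (h22 : fderiv ℝ (fun w => fderiv ℝ φ w v2) h0 u2 = 1) :
    ∃ δ > 0, GoodMeas ((ν.restrict (ball h0 δ)).map (fun h => pr h + φ h • u)) := by
  have hAc : ContDiff ℝ 1 (fun w => fderiv ℝ φ w v1) :=
    (hφ.fderiv_right (m := 1) (by norm_num)).clm_apply contDiff_const
  have hBc : ContDiff ℝ 1 (fun w => fderiv ℝ φ w v2) :=
    (hφ.fderiv_right (m := 1) (by norm_num)).clm_apply contDiff_const
  have hAm := hAc.continuous.measurable
  have hBm := hBc.continuous.measurable
  obtain ⟨ε, hε, hIntegr⟩ := local_integrability ν _ _ hAm hBm h0 hAc.contDiffAt hBc.contDiffAt hA0 hB0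
    u1 u2 h11 h12 h21 h22
  obtain ⟨δ1, hδ1, hg1⟩ := good_half ν φ hφ pr j u hu hprj hju v1 v2 hv1 h0 hA0 ε hε hIntegr
  obtain ⟨δ2, hδ2, hg2⟩ := good_half ν φ hφ pr j u hu hprj hju v2 v1 hv2 h0 hB0 ε hε
    (fun c hc => by simpa only [mul_comm] using hIntegr c hc)
  have hYm : Measurable (fun h => pr h + φ h • u) := by
    have := hφ.continuous
    exact Continuous.measurable (by fun_prop)
  set δ := min ε (min δ1 δ2) with hδ
  refine ⟨δ, by positivity, (hg1.add hg2).mono ?_⟩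
  rw [← Measure.map_add _ _ hYm]
  refine Measure.map_mono ?_ hYm
  set N : Set H := ball h0 ε ∩ {w | fderiv ℝ φ w v1 = 0} with hN
  have hN0 : ν N = 0 := by
    have h1 := hIntegr (1 / 2) (by norm_num)
    have h2 := ae_lt_top (by fun_prop) h1
    rw [ae_restrict_iff' measurableSet_ball] at h2
    refine measure_mono_null ?_ h2
    rintro w ⟨hw, hw0⟩
    simp only [mem_compl_iff]
    intro h
    have h3 := h hw
    rw [show fderiv ℝ φ w v1 = 0 from hw0] at h3
    rw [abs_zero, ENNReal.ofReal_zero, ENNReal.zero_rpow_of_neg (by norm_num)] at h3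
    rw [ENNReal.top_mul] at h3
    · exact lt_irrefl _ h3
    · rw [ENNReal.rpow_neg]
      exact ENNReal.inv_ne_zero.2 (ENNReal.rpow_ne_top_of_nonneg (by norm_num) ENNReal.ofReal_ne_top)
  have hsub : ball h0 δ ⊆ ((ball h0 δ1 ∩
      {w | |fderiv ℝ φ w v2| ≤ |fderiv ℝ φ w v1| ∧ fderiv ℝ φ w v1 ≠ 0}) ∪ (ball h0 δ2 ∩
      {w | |fderiv ℝ φ w v1| ≤ |fderiv ℝ φ w v2| ∧ fderiv ℝ φ w v2 ≠ 0})) ∪ N := by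
    intro w hw
    by_cases h : fderiv ℝ φ w v1 = 0
    · exact Or.inr ⟨ball_subset_ball (min_le_left _ _) hw, h⟩
    · left
      rcases le_total |fderiv ℝ φ w v2| |fderiv ℝ φ w v1| with h' | h'
      · exact Or.inl ⟨ball_subset_ball ((min_le_right _ _).trans (min_le_left _ _)) hw, h', h⟩
      · refine Or.inr ⟨ball_subset_ball ((min_le_right _ _).trans (min_le_right _ _)) hw, h', ?_⟩
        intro h2
        rw [h2, abs_zero] at h'
        exact h (abs_eq_zero.1 (le_antisymm h' (abs_nonneg _)))
  refine (Measure.restrict_mono hsub le_rfl).trans ((Measure.restrict_union_le _ _).trans ?_)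
  rw [Measure.restrict_zero_set hN0, add_zero]
  exact Measure.restrict_union_le _ _

theorem good_case1 {n : ℕ} {H : Type*} [NormedAddCommGroup H] [NormedSpace ℝ H]
    [FiniteDimensional ℝ H]
    [MeasurableSpace H] [BorelSpace H] (ν : Measure H) [ν.IsAddHaarMeasure]
    (pr : H →L[ℝ] Rn n) (j : Rn n →L[ℝ] H) (hprj : ∀ q, pr (j q) = q) (h0 : H) :
    GoodMeas ((ν.restrict (ball h0 1)).map pr) := by
  set M : ℝ := ‖j‖ + 1 with hM
  have hM0 : 0 < M := by positivity
  refine goodMeas_of_whitney ν j (ball h0 1) (ball h0 (1 + M)) (fun _ => 1) (fun _ => 1) pr 1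
    (‖pr‖ * (‖h0‖ + 1 + M) + 1) measurableSet_ball measurableSet_ball measurable_const
    measurable_const pr.continuous.measurable one_pos (by positivity) ?_ ?_ ?_ ?_
  · intro w hw
    refine ⟨one_pos, fun q hq => ⟨?_, by linarith, by norm_num⟩⟩
    rw [mem_ball, dist_eq_norm] at hw ⊢
    have h1 := j.le_opNorm q
    have h2 : ‖j‖ * ‖q‖ ≤ ‖j‖ * 1 := by gcongr; linarith
    calc ‖w - j q - h0‖ = ‖(w - h0) - j q‖ := by congr 1; abel
      _ ≤ ‖w - h0‖ + ‖j q‖ := norm_sub_le _ _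
      _ < _ := by linarith
  · intro w hw
    rw [mem_ball, dist_eq_norm] at hw
    have h1 : ‖w‖ ≤ ‖h0‖ + 1 + M := by
      calc ‖w‖ = ‖(w - h0) + h0‖ := by congr 1; abel
        _ ≤ ‖w - h0‖ + ‖h0‖ := norm_add_le _ _
        _ ≤ _ := by linarith
    refine ⟨?_, one_pos, ?_⟩
    · calc ‖pr w‖ ≤ ‖pr‖ * ‖w‖ := pr.le_opNorm w
        _ ≤ ‖pr‖ * (‖h0‖ + 1 + M) := by gcongr
        _ ≤ _ := by linarith
    · have : 0 ≤ ‖pr‖ * (‖h0‖ + 1 + M) := by positivity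
      linarith
  · intro w hw F hF
    have h1 := lintegral_ball_scale' F hF (pr w) 1 one_pos
    simp only [one_pow, ENNReal.ofReal_one, one_mul, one_smul, mul_one] at h1 ⊢
    rw [h1]
    simp only [map_add, hprj]
    exact le_rfl
  · intro p hp
    simp only [ENNReal.ofReal_one, Real.one_rpow, mul_one]
    rw [setLIntegral_const, one_mul]
    exact measure_ball_lt_top.ne

theorem contDiff_extend {H : Type*} [NormedAddCommGroup H] [NormedSpace ℝ H]
    [FiniteDimensional ℝ H] (φ0 : H → ℝ) (h0 : H) (h : ContDiffAt ℝ 2 φ0 h0) :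
    ∃ φ : H → ℝ, ContDiff ℝ 2 φ ∧ ∀ᶠ x in nhds h0, φ x = φ0 x := by
  obtain ⟨r, hr, hball⟩ := Metric.eventually_nhds_iff_ball.1 (h.eventually (by simp))
  let χ : ContDiffBump h0 := ⟨r / 4, r / 2, by positivity, by linarith⟩
  refine ⟨fun x => χ x * φ0 x, ?_, ?_⟩
  · rw [contDiff_iff_contDiffAt]
    intro x
    by_cases hx : x ∈ tsupport (fun x => χ x * φ0 x)
    swap
    · exact contDiffAt_const.congr_of_eventuallyEq (notMem_tsupport_iff_eventuallyEq.1 hx)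
    have h1 : x ∈ closedBall h0 (r / 2) := by
      have := tsupport_mul_subset_left (f := χ) (g := φ0) hx
      rwa [χ.tsupport_eq] at this
    have h2 : x ∈ ball h0 r := closedBall_subset_ball (by linarith) h1
    exact (χ.contDiff.contDiffAt).mul (hball x h2)
  · filter_upwards [closedBall_mem_nhds h0 (by positivity : 0 < r / 4)] with x hx
    rw [χ.one_of_mem_closedBall hx, one_mul]

theorem chart {n : ℕ} (S U : Set (E2 n)) (p0 : E2 n) (hp0 : p0 ∈ S) (Φ : E2 n → ℝ)
    (hU : IsOpen U) (hpU : p0 ∈ U) (hΦ : ContDiff ℝ (⊤ : ℕ∞) Φ)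
    (hSU : S ∩ U = {x ∈ U | Φ x = 0})
    (e : E2 n) (ℓ : E2 n →L[ℝ] ℝ) (hℓe : ℓ e = 1) (hde : fderiv ℝ Φ p0 e ≠ 0)
    (H : Submodule ℝ (E2 n)) (hH : ∀ x, x ∈ H ↔ ℓ x = 0) :
    ∃ (φ : H → ℝ) (h0 : H), ContDiff ℝ 2 φ ∧ (h0 : E2 n) + φ h0 • e = p0 ∧
      (∀ᶠ h : H in nhds h0, Φ ((h : E2 n) + φ h • e) = 0) ∧
      ∀ δ > 0, ∃ U' ∈ nhds p0, ∃ K : ℝ≥0,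
        (μH[(2 * (n : ℝ) - 1)]).restrict (S ∩ U') ≤
          K • (((μH[(2 * (n : ℝ) - 1)] : Measure H).restrict (ball h0 δ)).map
            (fun h : H => (h : E2 n) + φ h • e)) := by
  haveI : CompleteSpace H := FiniteDimensional.complete ℝ H
  let P : E2 n →L[ℝ] H := (ContinuousLinearMap.id ℝ (E2 n) - ℓ.smulRight e).codRestrict H (by
    intro x
    rw [hH]
    simp [hℓe])
  have hP : ∀ x, (P x : E2 n) = x - ℓ x • e := fun x => rfl
  set h0 : H := P p0 with hh0
  set f : H × ℝ → ℝ := fun z => Φ ((z.1 : E2 n) + z.2 • e) with hf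
  set aff : H × ℝ →L[ℝ] E2 n := H.subtypeL.comp (ContinuousLinearMap.fst ℝ H ℝ) +
    (ContinuousLinearMap.snd ℝ H ℝ).smulRight e with haff
  have hfaff : f = fun z => Φ (aff z) := by
    ext z; simp [hf, haff]
  have hfc : ContDiff ℝ 2 f := by
    rw [hfaff]
    exact (contDiff_infty.1 hΦ 2).comp aff.contDiff
  have hu0 : aff (h0, ℓ p0) = p0 := by
    simp [haff, hh0, hP]
  have hfd : fderiv ℝ f (h0, ℓ p0) = (fderiv ℝ Φ p0).comp aff := by
    have h1 : HasFDerivAt Φ (fderiv ℝ Φ p0) (aff (h0, ℓ p0)) := by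
      rw [hu0]
      exact (hΦ.differentiable (by simp) p0).hasFDerivAt
    rw [hfaff]
    exact (h1.comp (h0, ℓ p0) aff.hasFDerivAt).fderiv
  have hΦ0 : Φ p0 = 0 := by
    have : p0 ∈ {x ∈ U | Φ x = 0} := hSU ▸ ⟨hp0, hpU⟩
    exact this.2
  have hf0 : f (h0, ℓ p0) = 0 := by rw [hfaff]; simp only [hu0, hΦ0]
  have hinv : (fderiv ℝ f (h0, ℓ p0) ∘L .inr ℝ H ℝ).IsInvertible := by
    refine ⟨ContinuousLinearEquiv.unitsEquivAut ℝ (Units.mk0 _ hde), ?_⟩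
    ext
    rw [hfd]
    simp [haff]
  have cdf : ContDiffAt ℝ 2 f (h0, ℓ p0) := hfc.contDiffAt
  set φ0 : H → ℝ := cdf.implicitFunction two_ne_zero hinv with hφ0
  have g1 : φ0 h0 = ℓ p0 := cdf.implicitFunction_apply_self two_ne_zero hinv
  have g2 := cdf.eventually_apply_implicitFunction two_ne_zero hinv
  have g3 := cdf.eventually_apply_eq_iff_implicitFunction two_ne_zero hinv
  have g4 : ContDiffAt ℝ 2 φ0 h0 := cdf.contDiffAt_implicitFunction two_ne_zero hinv
  obtain ⟨φ, hφ, hφe⟩ := contDiff_extend φ0 h0 g4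
  have hψc : ContDiff ℝ 2 (fun h : H => (h : E2 n) + φ h • e) := by
    have : ContDiff ℝ 2 (fun h : H => (h : E2 n)) := H.subtypeL.contDiff
    exact this.add (hφ.smul contDiff_const)
  refine ⟨φ, h0, hφ, ?_, ?_, fun δ hδ => ?_⟩
  · rw [hφe.self_of_nhds, g1, hh0, hP]; simp
  · filter_upwards [g2, hφe] with h h1 h2
    rw [h2]
    have : f (h, φ0 h) = 0 := h1.trans hf0
    exact this
  · obtain ⟨K, t, ht, hK⟩ := (hψc.of_le (by norm_num : (1 : WithTop ℕ∞) ≤ 2)).contDiffAt.exists_lipschitzOnWith (x := h0)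
    have hd0 : (0 : ℝ) ≤ 2 * (n : ℝ) - 1 ∨ n = 0 := by
      rcases Nat.eq_zero_or_pos n with h | h
      · exact Or.inr h
      · left
        have : (1 : ℝ) ≤ n := by exact_mod_cast h
        linarith
    have hd : (0 : ℝ) ≤ 2 * (n : ℝ) - 1 := by
      rcases hd0 with h | h
      · exact h
      · subst h
        exfalso
        apply hde
        have : e = 0 := Subsingleton.elim _ _
        rw [this, map_zero]
    have ev : ∀ᶠ w in nhds p0, w ∈ U ∧ (Φ w = 0 → φ (P w) = ℓ w) ∧ P w ∈ t ∧ P w ∈ ball h0 δ := by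
      have c1 : Filter.Tendsto (fun w => (P w, ℓ w)) (nhds p0) (nhds (h0, ℓ p0)) :=
        (P.continuous.prodMk ℓ.continuous).tendsto p0
      have c2 : Filter.Tendsto P (nhds p0) (nhds h0) := P.continuous.tendsto p0
      filter_upwards [hU.mem_nhds hpU, c1.eventually g3, c2.eventually hφe, c2 ht,
        c2 (ball_mem_nhds h0 hδ)] with w a1 a2 a3 a4 a5
      refine ⟨a1, fun hw => ?_, a4, a5⟩
      rw [a3]
      refine a2.1 ?_
      rw [hf0]
      simp only [hf, hP, sub_add_cancel]
      exact hw
    refine ⟨_, ev, K ^ (2 * (n : ℝ) - 1), ?_⟩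
    rw [Measure.le_iff]
    intro s hs
    rw [Measure.restrict_apply hs, Measure.smul_apply,
      Measure.map_apply hψc.continuous.measurable hs,
      Measure.restrict_apply (hψc.continuous.measurable hs)]
    set ψ : H → E2 n := fun h => (h : E2 n) + φ h • e with hψ
    have hsub : s ∩ (S ∩ {w | w ∈ U ∧ (Φ w = 0 → φ (P w) = ℓ w) ∧ P w ∈ t ∧ P w ∈ ball h0 δ}) ⊆
        ψ '' (t ∩ (ψ ⁻¹' s ∩ ball h0 δ)) := by
      rintro w ⟨hws, hwS, hwU, hwφ, hwt, hwb⟩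
      have hΦw : Φ w = 0 := by
        have : w ∈ {x ∈ U | Φ x = 0} := hSU ▸ ⟨hwS, hwU⟩
        exact this.2
      have hψw : ψ (P w) = w := by
        simp only [hψ]
        rw [hwφ hΦw, hP]; simp
      exact ⟨P w, ⟨hwt, by rw [mem_preimage, hψw]; exact hws, hwb⟩, hψw⟩
    refine (measure_mono hsub).trans ?_
    refine ((hK.mono inter_subset_left).hausdorffMeasure_image_le hd).trans ?_
    rw [ENNReal.smul_def, smul_eq_mul, ENNReal.coe_rpow_of_nonneg _ hd]
    exact mul_le_mul' le_rfl (measure_mono inter_subset_right)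

theorem linalg_rank_two_aux {n : ℕ} {V E : Type*} [AddCommGroup V] [Module ℝ V]
    [FiniteDimensional ℝ V] [AddCommGroup E] [Module ℝ E] [FiniteDimensional ℝ E]
    (hV : Module.finrank ℝ V = n)
    (ι1 ι2 : V →ₗ[ℝ] E) (p1 p2 : E → V) (split : ∀ w : E, w = ι1 (p1 w) + ι2 (p2 w))
    (B : E →ₗ[ℝ] E →ₗ[ℝ] ℝ) (L : E →ₗ[ℝ] ℝ) (hL : L ≠ 0)
    (hL0 : ∀ v, L (ι2 v) = 0) (W : Submodule ℝ E) (hW : ∀ w ∈ W, L w = 0)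
    (hdim : Module.finrank ℝ W = n + 1) (hnd : ∀ w ∈ W, w ≠ 0 → ∃ w' ∈ W, B w w' ≠ 0) :
    ∃ w1 ∈ W, ∃ w2 ∈ W, ∃ v1 v2 : V, B w1 (ι2 v1) = 1 ∧ B w1 (ι2 v2) = 0 ∧
      B w2 (ι2 v1) = 0 ∧ B w2 (ι2 v2) = 1 := by
  set L1 : Module.Dual ℝ V := L.comp ι1 with hL1
  have hL1ne : L1 ≠ 0 := by
    intro h
    apply hL
    ext w
    rw [split w, map_add, hL0, add_zero]
    exact DFunLike.congr_fun h _
  have hM := Module.Dual.finrank_ker_add_one_of_ne_zero hL1ne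
  rw [hV] at hM
  set M := LinearMap.ker L1
  set β : W →ₗ[ℝ] (V →ₗ[ℝ] ℝ) := (LinearMap.lcomp ℝ ℝ ι2).comp (B.comp W.subtype) with hβ
  have hβa : ∀ w v, β w v = B w (ι2 v) := fun w v => rfl
  set K := LinearMap.ker β with hK
  have hKdim : Module.finrank ℝ K ≤ Module.finrank ℝ M := by
    let γ : K →ₗ[ℝ] Module.Dual ℝ M :=
      (LinearMap.lcomp ℝ ℝ (ι1.comp M.subtype)).comp ((B.comp W.subtype).comp K.subtype)
    have hγ : ∀ k m, γ k m = B k (ι1 m) := fun k m => rfl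
    have hinj : Function.Injective γ := by
      rw [injective_iff_map_eq_zero]
      intro k hk
      by_contra hk0
      have hk1 : ((k : W) : E) ≠ 0 := by
        intro h; apply hk0; ext1; ext1; exact h
      obtain ⟨w', hw', hne⟩ := hnd _ (k : W).2 hk1
      apply hne
      rw [split w', map_add]
      have a1 : B k (ι2 (p2 w')) = 0 := by
        have : β (k : W) = 0 := LinearMap.mem_ker.1 k.2
        exact DFunLike.congr_fun this (p2 w')
      have a2 : p1 w' ∈ M := by
        rw [LinearMap.mem_ker]
        have h1 := hW w' hw'
        rw [split w', map_add, hL0, add_zero] at h1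
        exact h1
      have a3 : B k (ι1 (p1 w')) = 0 := DFunLike.congr_fun hk ⟨p1 w', a2⟩
      rw [a1, a3, add_zero]
    exact (LinearMap.finrank_le_finrank_of_injective hinj).trans_eq Subspace.dual_finrank_eq
  obtain ⟨w1, hw1⟩ : ∃ w1 : W, β w1 ≠ 0 := by
    by_contra! h
    have : K = ⊤ := by
      rw [eq_top_iff]; intro x _; rw [hK, LinearMap.mem_ker]; exact h x
    rw [this, finrank_top] at hKdim
    omega
  obtain ⟨v0, hv0⟩ : ∃ v0, β w1 v0 ≠ 0 := by
    by_contra! h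
    exact hw1 (LinearMap.ext h)
  set v1 := (β w1 v0)⁻¹ • v0 with hv1
  have h11 : β w1 v1 = 1 := by rw [hv1, map_smul, smul_eq_mul, inv_mul_cancel₀ hv0]
  obtain ⟨w2, hw2, hw21⟩ : ∃ w2 : W, β w2 ≠ 0 ∧ β w2 v1 = 0 := by
    by_contra! h
    have h' : ∀ w : W, w - β w v1 • w1 ∈ K := by
      intro w
      rw [hK, LinearMap.mem_ker]
      by_contra hne
      apply h _ hne
      simp [h11]
    let T : W →ₗ[ℝ] W := LinearMap.id - (β.flip v1).smulRight w1
    have hT : ∀ w, T w = w - β w v1 • w1 := fun w => rfl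
    let T' : W →ₗ[ℝ] K × ℝ := (T.codRestrict K (fun w => by rw [hT]; exact h' w)).prod (β.flip v1)
    have hinj : Function.Injective T' := by
      rw [injective_iff_map_eq_zero]
      intro w hw
      have b1 : T w = 0 := congrArg (fun z => ((Prod.fst z : K) : W)) hw
      have b2 : β w v1 = 0 := congrArg Prod.snd hw
      rw [hT, b2] at b1
      simpa using b1
    have := LinearMap.finrank_le_finrank_of_injective hinj
    rw [Module.finrank_prod, Module.finrank_self] at this
    omega
  obtain ⟨v0', hv0'⟩ : ∃ v0', β w2 v0' ≠ 0 := by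
    by_contra! h
    exact hw2 (LinearMap.ext h)
  refine ⟨w1, w1.2, w2, w2.2, v1, (β w2 v0')⁻¹ • (v0' - β w1 v0' • v1), h11, ?_, hw21, ?_⟩
  · rw [← hβa, map_smul, map_sub, map_smul, h11]; simp
  · rw [← hβa, map_smul, map_sub, map_smul, hw21]; simp [hv0']

theorem linalg_rank_two {n : ℕ} (B : E2 n →ₗ[ℝ] E2 n →ₗ[ℝ] ℝ) (L : E2 n →ₗ[ℝ] ℝ) (hL : L ≠ 0)
    (hL0 : ∀ v, L (0, v) = 0) (W : Submodule ℝ (E2 n)) (hW : ∀ w ∈ W, L w = 0)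
    (hdim : Module.finrank ℝ W = n + 1) (hnd : ∀ w ∈ W, w ≠ 0 → ∃ w' ∈ W, B w w' ≠ 0) :
    ∃ w1 ∈ W, ∃ w2 ∈ W, ∃ v1 v2 : Rn n, B w1 (0, v1) = 1 ∧ B w1 (0, v2) = 0 ∧
      B w2 (0, v1) = 0 ∧ B w2 (0, v2) = 1 :=
  linalg_rank_two_aux (finrank_euclideanSpace_fin (𝕜 := ℝ)) (LinearMap.inl ℝ (Rn n) (Rn n))
    (LinearMap.inr ℝ (Rn n) (Rn n)) Prod.fst Prod.snd (fun w => by simp) B L hL hL0 W hW hdim hnd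

theorem chart_deriv {n : ℕ} (p0 : E2 n) (Φ : E2 n → ℝ)
    (hΦ : ContDiff ℝ (⊤ : ℕ∞) Φ) (e : E2 n)
    (H : Submodule ℝ (E2 n)) (φ : H → ℝ) (h0 : H) (hφ : ContDiff ℝ 2 φ)
    (hp0 : (h0 : E2 n) + φ h0 • e = p0)
    (hz : ∀ᶠ h : H in nhds h0, Φ ((h : E2 n) + φ h • e) = 0) :
    (∀ τ : H, fderiv ℝ Φ p0 τ + fderiv ℝ φ h0 τ * fderiv ℝ Φ p0 e = 0) ∧
    ∀ v : H, fderiv ℝ φ h0 v = 0 → ∀ τ : H,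
      hess Φ p0 ((τ : E2 n) + fderiv ℝ φ h0 τ • e) v +
        fderiv ℝ (fun w => fderiv ℝ φ w v) h0 τ * fderiv ℝ Φ p0 e = 0 := by
  set ψ : H → E2 n := fun h => (h : E2 n) + φ h • e with hψ
  have hψd : ∀ h, HasFDerivAt ψ (H.subtypeL + (fderiv ℝ φ h).smulRight e) h := by
    intro h
    have h1 : HasFDerivAt φ (fderiv ℝ φ h) h := (hφ.differentiable (by simp) h).hasFDerivAt
    exact (H.subtypeL.hasFDerivAt).add (h1.smul_const e)
  have hΦd : ∀ x, HasFDerivAt Φ (fderiv ℝ Φ x) x := fun x =>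
    (hΦ.differentiable (by simp) x).hasFDerivAt
  have key : ∀ᶠ h : H in nhds h0, ∀ τ : H,
      fderiv ℝ Φ (ψ h) τ + fderiv ℝ φ h τ * fderiv ℝ Φ (ψ h) e = 0 := by
    filter_upwards [hz.eventually_nhds] with h hh τ
    have h1 : HasFDerivAt (fun h => Φ (ψ h)) _ h := (hΦd (ψ h)).comp h (hψd h)
    have h2 : HasFDerivAt (fun h => Φ (ψ h)) (0 : H →L[ℝ] ℝ) h :=
      (hasFDerivAt_const (0 : ℝ) h).congr_of_eventuallyEq hh
    have h3 := DFunLike.congr_fun (h1.unique h2) τ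
    simpa using h3
  have hp0' : ψ h0 = p0 := hp0
  refine ⟨fun τ => ?_, fun v hv τ => ?_⟩
  · have := key.self_of_nhds τ
    rwa [hp0'] at this
  · have dΦ : ∀ u : E2 n, HasFDerivAt (fun y => fderiv ℝ Φ y u)
        (fderiv ℝ (fun y => fderiv ℝ Φ y u) p0) (ψ h0) := by
      intro u
      rw [hp0']
      have : ContDiff ℝ 1 (fun y => fderiv ℝ Φ y u) :=
        ((contDiff_infty.1 hΦ 2).fderiv_right (m := 1) (by norm_num)).clm_apply contDiff_const
      exact (this.differentiable (by simp) p0).hasFDerivAt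
    have dφ : HasFDerivAt (fun w => fderiv ℝ φ w v)
        (fderiv ℝ (fun w => fderiv ℝ φ w v) h0) h0 := by
      have : ContDiff ℝ 1 (fun w => fderiv ℝ φ w v) :=
        (hφ.fderiv_right (m := 1) (by norm_num)).clm_apply contDiff_const
      exact (this.differentiable (by simp) h0).hasFDerivAt
    have c1 := (dΦ v).comp h0 (hψd h0)
    have c2 := (dΦ e).comp h0 (hψd h0)
    have c3 := c1.add (dφ.mul c2)
    have c4 : HasFDerivAt (fun h : H => fderiv ℝ Φ (ψ h) v + fderiv ℝ φ h v * fderiv ℝ Φ (ψ h) e)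
      (0 : H →L[ℝ] ℝ) h0 :=
      (hasFDerivAt_const (0 : ℝ) h0).congr_of_eventuallyEq (by
        filter_upwards [key] with h hh
        exact hh v)
    have c5 := DFunLike.congr_fun (c3.unique c4) τ
    simp only [Function.comp_apply, hp0', hv] at c5
    simp only [hess]
    simp at c5 ⊢
    linarith

theorem hess_linear {n : ℕ} (p0 : E2 n) (Φ : E2 n → ℝ) (hΦ : ContDiff ℝ (⊤ : ℕ∞) Φ) :
    ∃ B : E2 n →ₗ[ℝ] E2 n →ₗ[ℝ] ℝ, ∀ u v, B u v = hess Φ p0 u v := by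
  have hd : DifferentiableAt ℝ (fderiv ℝ Φ) p0 :=
    ((contDiff_infty.1 hΦ 2).fderiv_right (m := 1) (by norm_num)).differentiable (by simp) p0
  refine ⟨LinearMap.mk₂ ℝ (fun u v => fderiv ℝ (fderiv ℝ Φ) p0 u v) (by simp) (by simp) (by simp)
    (by simp), fun u v => ?_⟩
  rw [hess, LinearMap.mk₂_apply]
  have := (hd.hasFDerivAt.clm_apply (hasFDerivAt_const v p0)).fderiv
  rw [this]
  simp

theorem haar_H {n : ℕ} (ℓ : E2 n →L[ℝ] ℝ) (hℓ : ℓ ≠ 0) :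
    (μH[(2 * (n : ℝ) - 1)] : Measure (LinearMap.ker (ℓ : E2 n →ₗ[ℝ] ℝ))).IsAddHaarMeasure := by
  have hne : (ℓ : E2 n →ₗ[ℝ] ℝ) ≠ 0 := by
    intro h
    apply hℓ
    refine ContinuousLinearMap.ext fun x => ?_
    exact DFunLike.congr_fun h x
  have h1 := Module.Dual.finrank_ker_add_one_of_ne_zero (f := (ℓ : E2 n →ₗ[ℝ] ℝ)) hne
  have h2 : Module.finrank ℝ (E2 n) = n + n := by
    rw [Module.finrank_prod, finrank_euclideanSpace_fin]
  have h3 : (2 * (n : ℝ) - 1) = (Module.finrank ℝ (LinearMap.ker (ℓ : E2 n →ₗ[ℝ] ℝ)) : ℝ) := by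
    have h4 := h1.trans h2
    have h5 : ((Module.finrank ℝ (LinearMap.ker (ℓ : E2 n →ₗ[ℝ] ℝ)) : ℝ)) + 1 = n + n := by
      exact_mod_cast h4
    linarith
  rw [h3]
  infer_instance

theorem local_good {n : ℕ} (S U : Set (E2 n)) (p0 : E2 n) (hp0 : p0 ∈ S) (Φ : E2 n → ℝ)
    (hU : IsOpen U) (hpU : p0 ∈ U) (hΦ : ContDiff ℝ (⊤ : ℕ∞) Φ)
    (hSU : S ∩ U = {x ∈ U | Φ x = 0}) (hd : fderiv ℝ Φ p0 ≠ 0)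
    (W : Submodule ℝ (E2 n)) (hW : ∀ w ∈ W, fderiv ℝ Φ p0 w = 0)
    (hdim : Module.finrank ℝ W = n + 1)
    (hnd : ∀ w ∈ W, w ≠ 0 → ∃ w' ∈ W, hess Φ p0 w w' ≠ 0) :
    ∃ U' ∈ nhds p0, GoodMeas (((μH[(2 * (n : ℝ) - 1)]).restrict (S ∩ U')).map Prod.fst) := by
  -- reduction to a chart
  have red : ∀ (e : E2 n) (H : Submodule ℝ (E2 n)) (φ : H → ℝ) (h0 : H) (hφ : ContDiff ℝ 2 φ)
      (hc : ∀ δ > 0, ∃ U' ∈ nhds p0, ∃ K : ℝ≥0,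
        (μH[(2 * (n : ℝ) - 1)]).restrict (S ∩ U') ≤
          K • (((μH[(2 * (n : ℝ) - 1)] : Measure H).restrict (ball h0 δ)).map
            (fun h : H => (h : E2 n) + φ h • e)))
      (hg : ∃ δ > 0, GoodMeas (((μH[(2 * (n : ℝ) - 1)] : Measure H).restrict (ball h0 δ)).map
            (fun h : H => (h : E2 n).1 + φ h • e.1))),
      ∃ U' ∈ nhds p0, GoodMeas (((μH[(2 * (n : ℝ) - 1)]).restrict (S ∩ U')).map Prod.fst) := by
    intro e H φ h0 hφ hc ⟨δ, hδ, hg⟩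
    obtain ⟨U', hU', K, hK⟩ := hc δ hδ
    refine ⟨U', hU', (hg.smul K).mono ?_⟩
    refine (Measure.map_mono hK measurable_fst).trans_eq ?_
    have hm : Measurable (fun h : H => (h : E2 n) + φ h • e) := by
      have := hφ.continuous
      have : Continuous (fun h : H => (h : E2 n) + φ h • e) := by fun_prop
      exact this.measurable
    rw [Measure.map_smul, Measure.map_map measurable_fst hm]
    rfl
  by_cases hcase : ∃ v : Rn n, fderiv ℝ Φ p0 (0, v) ≠ 0
  · obtain ⟨v', hv'⟩ := hcase
    have hv0 : v' ≠ 0 := by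
      rintro rfl
      apply hv'
      exact map_zero _
    set v : Rn n := ‖v'‖⁻¹ • v' with hv
    have hvn : ‖v‖ = 1 := by
      rw [hv, norm_smul, norm_inv, norm_norm, inv_mul_cancel₀ (norm_ne_zero_iff.2 hv0)]
    set e : E2 n := (0, v) with he
    have hde : fderiv ℝ Φ p0 e ≠ 0 := by
      have : e = ‖v'‖⁻¹ • ((0 : Rn n), v') := by simp [he, hv]
      rw [this, map_smul]
      exact smul_ne_zero (inv_ne_zero (norm_ne_zero_iff.2 hv0)) hv'
    set ℓ : E2 n →L[ℝ] ℝ := (innerSL ℝ v).comp (ContinuousLinearMap.snd ℝ (Rn n) (Rn n)) with hℓ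
    have hℓe : ℓ e = 1 := by simp [hℓ, he, hvn]
    have hℓ0 : ℓ ≠ 0 := by
      intro h; rw [h] at hℓe; simp at hℓe
    set H := LinearMap.ker (ℓ : E2 n →ₗ[ℝ] ℝ) with hHdef
    have hH : ∀ x, x ∈ H ↔ ℓ x = 0 := fun x => LinearMap.mem_ker
    haveI := haar_H ℓ hℓ0
    obtain ⟨φ, h0, hφ, hp, hz, hc⟩ := chart S U p0 hp0 Φ hU hpU hΦ hSU e ℓ hℓe hde H hH
    refine red e H φ h0 hφ hc ⟨1, one_pos, ?_⟩
    let pr : H →L[ℝ] Rn n := (ContinuousLinearMap.fst ℝ (Rn n) (Rn n)).comp H.subtypeL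
    let j : Rn n →L[ℝ] H := (ContinuousLinearMap.inl ℝ (Rn n) (Rn n)).codRestrict H (by
      intro x
      rw [hH]
      simp [hℓ])
    have := good_case1 (μH[(2 * (n : ℝ) - 1)] : Measure H) pr j (fun q => rfl) h0
    convert this using 2
    ext1 h
    simp [he, pr]
  · push Not at hcase
    obtain ⟨a, ha⟩ : ∃ a : Rn n, fderiv ℝ Φ p0 (a, 0) ≠ 0 := by
      by_contra! h
      apply hd
      refine ContinuousLinearMap.ext fun w => ?_
      have : w = (w.1, 0) + (0, w.2) := by simp
      rw [this, map_add, h, hcase]; simp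
    have ha0 : a ≠ 0 := by
      rintro rfl
      apply ha
      exact map_zero _
    set u : Rn n := ‖a‖⁻¹ • a with hu
    have hun : ‖u‖ = 1 := by
      rw [hu, norm_smul, norm_inv, norm_norm, inv_mul_cancel₀ (norm_ne_zero_iff.2 ha0)]
    set e : E2 n := (u, 0) with he
    have hde : fderiv ℝ Φ p0 e ≠ 0 := by
      have : e = ‖a‖⁻¹ • (a, (0 : Rn n)) := by simp [he, hu]
      rw [this, map_smul]
      exact smul_ne_zero (inv_ne_zero (norm_ne_zero_iff.2 ha0)) ha
    set ℓ : E2 n →L[ℝ] ℝ := (innerSL ℝ u).comp (ContinuousLinearMap.fst ℝ (Rn n) (Rn n)) with hℓ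
    have hℓe : ℓ e = 1 := by simp [hℓ, he, hun]
    have hℓ0 : ℓ ≠ 0 := by
      intro h; rw [h] at hℓe; simp at hℓe
    set H := LinearMap.ker (ℓ : E2 n →ₗ[ℝ] ℝ) with hHdef
    have hH : ∀ x, x ∈ H ↔ ℓ x = 0 := fun x => LinearMap.mem_ker
    haveI := haar_H ℓ hℓ0
    obtain ⟨φ, h0, hφ, hp, hz, hc⟩ := chart S U p0 hp0 Φ hU hpU hΦ hSU e ℓ hℓe hde H hH
    refine red e H φ h0 hφ hc ?_
    obtain ⟨d1, d2⟩ := chart_deriv p0 Φ hΦ e H φ h0 hφ hp hz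
    obtain ⟨B, hB⟩ := hess_linear p0 Φ hΦ
    have hLne : (fderiv ℝ Φ p0 : E2 n →ₗ[ℝ] ℝ) ≠ 0 := by
      intro h
      exact ha (DFunLike.congr_fun h (a, 0))
    obtain ⟨w1, hw1, w2, hw2, v1, v2, b11, b12, b21, b22⟩ :=
      linalg_rank_two B (fderiv ℝ Φ p0 : E2 n →ₗ[ℝ] ℝ) hLne hcase W hW hdim (by
        intro w hw hw0
        obtain ⟨w', h1, h2⟩ := hnd w hw hw0
        exact ⟨w', h1, by rwa [hB]⟩)
    set c := fderiv ℝ Φ p0 e with hcdef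
    -- vertical vectors
    let vv : Rn n → H := fun v => ⟨(0, (-c) • v), by rw [hH]; simp [hℓ]⟩
    have hvv : ∀ v, (vv v : E2 n) = (0, (-c) • v) := fun v => rfl
    have hA : ∀ v, fderiv ℝ φ h0 (vv v) = 0 := by
      intro v
      have := d1 (vv v)
      rw [hvv, hcase, zero_add] at this
      exact (mul_eq_zero.1 this).resolve_right hde
    let τ : E2 n → H := fun w => ⟨w - ℓ w • e, by rw [hH]; simp [hℓe]⟩
    have hτ : ∀ w, (τ w : E2 n) = w - ℓ w • e := fun w => rfl
    have hτφ : ∀ w ∈ W, fderiv ℝ φ h0 (τ w) = ℓ w := by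
      intro w hw
      have := d1 (τ w)
      rw [hτ, map_sub, hW w hw, map_smul, smul_eq_mul, zero_sub] at this
      have h2 : (fderiv ℝ φ h0 (τ w) - ℓ w) * c = 0 := by linarith
      linarith [(mul_eq_zero.1 h2).resolve_right hde]
    have hDA : ∀ v, ∀ w ∈ W, fderiv ℝ (fun h => fderiv ℝ φ h (vv v)) h0 (τ w) = B w (0, v) := by
      intro v w hw
      have h1 := d2 (vv v) (hA v) (τ w)
      rw [hτφ w hw, hτ, sub_add_cancel, ← hB, hvv] at h1
      have h3 : ((0 : Rn n), (-c) • v) = (-c) • ((0 : Rn n), v) := by simp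
      rw [h3, map_smul, smul_eq_mul] at h1
      have h2 : (fderiv ℝ (fun h => fderiv ℝ φ h (vv v)) h0 (τ w) - B w (0, v)) * c = 0 := by
        linarith
      linarith [(mul_eq_zero.1 h2).resolve_right hde]
    let pr : H →L[ℝ] Rn n := (ContinuousLinearMap.fst ℝ (Rn n) (Rn n)).comp H.subtypeL
    let j : Rn n →L[ℝ] H := ((ContinuousLinearMap.inl ℝ (Rn n) (Rn n)).comp
        (ContinuousLinearMap.id ℝ (Rn n) - (innerSL ℝ u).smulRight u)).codRestrict H (by
      intro x
      rw [hH]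
      simp [hℓ, inner_sub_right, inner_smul_right, hun])
    obtain ⟨δ, hδ, hg⟩ := good_case2 (μH[(2 * (n : ℝ) - 1)] : Measure H) φ hφ pr j u hun
      (fun q => rfl) (by
        ext1
        show (((ContinuousLinearMap.inl ℝ (Rn n) (Rn n)).comp
          (ContinuousLinearMap.id ℝ (Rn n) - (innerSL ℝ u).smulRight u)) u) = 0
        simp [hun])
      (vv v1) (vv v2) rfl rfl h0 (hA v1) (hA v2) (τ w1) (τ w2)
      ((hDA _ _ hw1).trans b11) ((hDA _ _ hw2).trans b21) ((hDA _ _ hw1).trans b12)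
      ((hDA _ _ hw2).trans b22)
    exact ⟨δ, hδ, hg⟩

theorem global_good {n : ℕ} (S : Set (E2 n)) (hS : IsSmoothHypersurfaceWithCurvatures n (n + 1) S) :
    GoodMeas (((μH[(2 * (n : ℝ) - 1)]).restrict S).map Prod.fst) := by
  obtain ⟨hcomp, hloc⟩ := hS
  have key : GoodMeas (((μH[(2 * (n : ℝ) - 1)]).restrict (S ∩ S)).map Prod.fst) := by
    refine hcomp.induction_on
      (p := fun s => GoodMeas (((μH[(2 * (n : ℝ) - 1)]).restrict (S ∩ s)).map Prod.fst)) ?_ ?_ ?_ ?_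
    · simpa using GoodMeas.zero
    · intro s t hst ht
      exact ht.mono (Measure.map_mono (Measure.restrict_mono_set _
        (inter_subset_inter_right _ hst)) measurable_fst)
    · intro s t hs ht
      refine (hs.add ht).mono ?_
      rw [inter_union_distrib_left, ← Measure.map_add _ _ measurable_fst]
      exact Measure.map_mono (Measure.restrict_union_le _ _) measurable_fst
    · intro x hx
      obtain ⟨U, Φ, hU, hpU, hΦ, hSU, hd, W, hW, hdim, hnd⟩ := hloc x hx
      obtain ⟨U', hU', hg⟩ := local_good S U x hx Φ hU hpU hΦ hSU hd W hW hdim hnd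
      exact ⟨U', mem_nhdsWithin_of_mem_nhds hU', hg⟩
  rwa [inter_self] at key

theorem swap_hyp {n k : ℕ} (S : Set (E2 n)) (hS : IsSmoothHypersurfaceWithCurvatures n k S) :
    IsSmoothHypersurfaceWithCurvatures n k (Prod.swap ⁻¹' S) := by
  obtain ⟨hcomp, hloc⟩ := hS
  let σ : E2 n ≃L[ℝ] E2 n := ContinuousLinearEquiv.prodComm ℝ (Rn n) (Rn n)
  have hσ : ∀ x, σ x = x.swap := fun x => rfl
  have hσσ : ∀ x, σ (σ x) = x := fun x => rfl
  have hpre : (Prod.swap ⁻¹' S : Set (E2 n)) = σ ⁻¹' S := rfl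
  refine ⟨?_, fun p hp => ?_⟩
  · rw [hpre]
    exact (σ.toHomeomorph.isCompact_preimage).2 hcomp
  · obtain ⟨U, Φ, hU, hpU, hΦ, hSU, hd, W, hW, hdim, hnd⟩ := hloc (σ p) hp
    have hfd : ∀ x v, fderiv ℝ (fun y => Φ (σ y)) x v = fderiv ℝ Φ (σ x) (σ v) := by
      intro x v
      have h1 : HasFDerivAt Φ (fderiv ℝ Φ (σ x)) (σ x) :=
        (hΦ.differentiable (by simp) _).hasFDerivAt
      have h2 := (h1.comp x σ.hasFDerivAt).fderiv
      have h3 : fderiv ℝ (fun y => Φ (σ y)) x = (fderiv ℝ Φ (σ x)).comp (σ : E2 n →L[ℝ] E2 n) := h2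
      rw [h3]
      rfl
    have hhess : ∀ u v, hess (fun y => Φ (σ y)) p u v = hess Φ (σ p) (σ u) (σ v) := by
      intro u v
      simp only [hess, hfd]
      have hc : ContDiff ℝ 1 (fun y => fderiv ℝ Φ y (σ v)) :=
        ((contDiff_infty.1 hΦ 2).fderiv_right (m := 1) (by norm_num)).clm_apply contDiff_const
      have h1 : HasFDerivAt (fun y => fderiv ℝ Φ y (σ v))
          (fderiv ℝ (fun y => fderiv ℝ Φ y (σ v)) (σ p)) (σ p) :=
        (hc.differentiable (by simp) _).hasFDerivAt
      have h2 := (h1.comp p σ.hasFDerivAt).fderiv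
      have h3 : fderiv ℝ (fun y => fderiv ℝ Φ (σ y) (σ v)) p =
        (fderiv ℝ (fun y => fderiv ℝ Φ y (σ v)) (σ p)).comp (σ : E2 n →L[ℝ] E2 n) := h2
      rw [h3]
      rfl
    refine ⟨σ ⁻¹' U, fun y => Φ (σ y), hU.preimage σ.continuous, hpU, hΦ.comp σ.contDiff, ?_, ?_,
      W.map (σ.toLinearEquiv : E2 n →ₗ[ℝ] E2 n), ?_, ?_, ?_⟩
    · rw [hpre, ← preimage_inter, hSU]
      rfl
    · intro h
      apply hd
      refine ContinuousLinearMap.ext fun w => ?_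
      have := DFunLike.congr_fun h (σ w)
      rw [hfd, hσσ] at this
      exact this
    · rintro _ ⟨w, hw, rfl⟩
      rw [hfd]
      exact hW w hw
    · rw [← hdim]
      exact LinearEquiv.finrank_map_eq σ.toLinearEquiv W
    · rintro _ ⟨w, hw, rfl⟩ hw0
      have hw0' : w ≠ 0 := by
        rintro rfl
        exact hw0 (map_zero _)
      obtain ⟨w', h1, h2⟩ := hnd w hw hw0'
      refine ⟨σ w', ⟨w', h1, rfl⟩, ?_⟩
      rw [hhess]
      exact h2

theorem global_good_snd {n : ℕ} (S : Set (E2 n))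
    (hS : IsSmoothHypersurfaceWithCurvatures n (n + 1) S) :
    GoodMeas (((μH[(2 * (n : ℝ) - 1)]).restrict S).map Prod.snd) := by
  have h := global_good _ (swap_hyp S hS)
  let σ : E2 n ≃ᵢ E2 n := ⟨Equiv.prodComm _ _, fun x y => by
    simp [Prod.edist_eq, max_comm]⟩
  have hm : (μH[(2 * (n : ℝ) - 1)] : Measure (E2 n)).map Prod.swap = μH[(2 * (n : ℝ) - 1)] :=
    σ.map_hausdorffMeasure _
  have hS' : MeasurableSet S := hS.1.measurableSet
  have h2 : (μH[(2 * (n : ℝ) - 1)] : Measure (E2 n)).restrict S =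
      ((μH[(2 * (n : ℝ) - 1)] : Measure (E2 n)).restrict (Prod.swap ⁻¹' S)).map Prod.swap := by
    rw [← Measure.restrict_map measurable_swap hS', hm]
  rw [h2, Measure.map_map measurable_snd measurable_swap]
  exact h

theorem surf_good {n : ℕ} (S : Set (E2 n)) (π : E2 n → Rn n)
    (hg : GoodMeas (((μH[(2 * (n : ℝ) - 1)]).restrict S).map π)) :
    GoodMeas ((μSurf n S).map π) := by
  by_cases h0 : μH[(2 * (n : ℝ) - 1)] S = 0
  · have : μSurf n S = 0 := by
      rw [μSurf, Measure.restrict_eq_zero.2 h0, smul_zero]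
    rw [this, Measure.map_zero]
    exact GoodMeas.zero
  · have h1 : (μH[(2 * (n : ℝ) - 1)] S)⁻¹ ≠ ∞ := ENNReal.inv_ne_top.2 h0
    have h2 : μSurf n S = (μH[(2 * (n : ℝ) - 1)] S)⁻¹.toNNReal •
        (μH[(2 * (n : ℝ) - 1)]).restrict S := by
      rw [μSurf]
      conv_lhs => rw [← ENNReal.coe_toNNReal h1]
      rfl
    rw [h2, Measure.map_smul]
    exact hg.smul _

theorem final {n : ℕ} (hn : 1 ≤ n) (S : Set (E2 n))
    (hS : IsSmoothHypersurfaceWithCurvatures n (n + 1) S)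
    (p q r : ℝ≥0∞) (hp : 1 < p) (hq : 1 < q) (hr : 1 < r)
    (hpqr : 1 / r = 1 / p + 1 / q) :
    ∃ C : ℝ≥0, ∀ f g : 𝓢(Rn n, ℝ),
      lpNormE volume (biMaxS n S f g) r ≤
        C * eLpNorm (f : Rn n → ℝ) p volume * eLpNorm (g : Rn n → ℝ) q volume := by
  refine bimax_bound hn S (surf_good S _ (global_good S hS)) (surf_good S _ (global_good_snd S hS))
    ?_ p q r hp hq hr hpqr
  rw [μSurf, Measure.smul_apply, Measure.restrict_apply_univ, smul_eq_mul]
  exact ENNReal.inv_mul_le_one _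

/-- Proposition 1.1: if the compact hypersurface `S ⊆ ℝⁿ × ℝⁿ` has at least `n+1`
non-vanishing principal curvatures, then `𝔐^S` maps `L^p × L^q → L^r` whenever
`1 < p, q, r ≤ ∞` and `1/r = 1/p + 1/q`. -/
theorem bilinear_maximal_nondegenerate_hypersurface
    (n : ℕ) (hn : 1 ≤ n) (S : Set (E2 n))
    (hS : IsSmoothHypersurfaceWithCurvatures n (n + 1) S)
    (p q r : ℝ≥0∞) (hp : 1 < p) (hq : 1 < q) (hr : 1 < r)
    (hpqr : 1 / r = 1 / p + 1 / q) :
    ∃ C : ℝ≥0, ∀ f g : 𝓢(Rn n, ℝ),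
      lpNormE volume (biMaxS n S f g) r ≤
        C * eLpNorm (f : Rn n → ℝ) p volume * eLpNorm (g : Rn n → ℝ) q volume := by
  exact final hn S hS p q r hp hq hr hpqr
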